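/- arXiv:2102.04651 — 9 statements merged into one kernel-verified Lean document; each statement's English description precedes it below -/
import Mathlib

section
/- For every integer r ≥ 1 there exist a constant ε₀ > 0 and a positive real c_r depending only on r such that for all real 0 < ε ≤ ε₀ and all integers k ≥ 2^r · r! · ε^{-1} · (log(1/(5ε)))^r, the ε-approximate Van der Waerden number satisfies c_r · k^r / (ε^{r-1} · (log(1/ε))^{\binom{r+1}{2}-1}) ≤ W_ε(k,r) ≤ 2k^r / ε^{r-1}. -/
/-- `x 0, …, x (k-1)` is an `ε`-approximate arithmetic progression of length `k`:
there exist a real `a` and a real `d > 0` with `|x i - (a + i·d)| < ε·d` for all `i < k`. -/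
def IsAPeps (ε : ℝ) (k : ℕ) (x : ℕ → ℤ) : Prop :=
  ∃ a d : ℝ, 0 < d ∧ ∀ i < k, |(x i : ℝ) - (a + (i : ℝ) * d)| < ε * d

/-- Every `r`-coloring of `{1,…,N}` contains a monochromatic `AP_k(ε)`. -/
def HasMonoAPeps (ε : ℝ) (k r N : ℕ) : Prop :=
  ∀ c : ℤ → Fin r, ∃ x : ℕ → ℤ,
    (∀ i < k, x i ∈ Finset.Icc (1 : ℤ) (N : ℤ)) ∧
    (∀ i < k, ∀ j < k, c (x i) = c (x j)) ∧
    IsAPeps ε k x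

/-- The ε-approximate Van der Waerden number `W_ε(k,r)`: the least positive integer `N`
such that every `r`-coloring of `{1,…,N}` contains a monochromatic `AP_k(ε)`. -/
noncomputable def Weps (ε : ℝ) (k r : ℕ) : ℕ :=
  sInf {N : ℕ | 0 < N ∧ HasMonoAPeps ε k r N}


/-- avoid -/
def GoodCol (ε : ℝ) (k r N : ℕ) (χ : ℤ → Fin r) : Prop :=
  ∀ x : ℕ → ℤ, (∀ i < k, x i ∈ Finset.Icc (1 : ℤ) (N : ℤ)) →
    (∀ i < k, ∀ j < k, χ (x i) = χ (x j)) → ¬ IsAPeps ε k x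

lemma count_avoid {M p : ℕ} (hp : 1 ≤ p) (A B : ℕ → Fin M) (τ : ℕ → Fin p) (T : ℕ)
    (hd : ∀ t < T, ∀ t' < t, A t' ≠ A t ∧ A t' ≠ B t ∧ B t' ≠ A t ∧ B t' ≠ B t) :
    ((Finset.univ.filter (fun s : Fin M → Fin p =>
      ∀ t < T, ¬ (s (A t) = τ t ∧ s (B t) = τ t))).card : ℝ) ≤
      (p : ℝ) ^ M * (1 - 1 / (p : ℝ) ^ 2) ^ T := by
  classical
  induction T with
  | zero => simp
  | succ T ih =>
    have ih' := ih (fun t ht => hd t (by omega))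
    set S := Finset.univ.filter (fun s : Fin M → Fin p =>
      ∀ t < T, ¬ (s (A t) = τ t ∧ s (B t) = τ t)) with hS
    set G := S.filter (fun s => s (A T) = τ T ∧ s (B T) = τ T) with hG
    have h1 : (Finset.univ.filter (fun s : Fin M → Fin p =>
      ∀ t < T + 1, ¬ (s (A t) = τ t ∧ s (B t) = τ t))) = S \ G := by
      ext s
      simp only [hS, hG, Finset.mem_filter, Finset.mem_univ, true_and, Finset.mem_sdiff]
      constructor
      · intro h
        exact ⟨fun t ht => h t (by omega), fun h2 => h T (by omega) h2.2⟩
      · rintro ⟨h, h2⟩ t ht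
        rcases Nat.lt_succ_iff_lt_or_eq.mp ht with h3 | h3
        · exact h t h3
        · subst h3
          intro h4
          exact h2 ⟨h, h4⟩
    have h2 : S.card ≤ (G ×ˢ (Finset.univ : Finset (Fin p × Fin p))).card := by
      apply Finset.card_le_card_of_injOn
        (fun s => (Function.update (Function.update s (A T) (τ T)) (B T) (τ T), (s (A T), s (B T))))
      · intro s hs
        simp only [hS, Finset.coe_filter, Finset.mem_univ, true_and, Set.mem_ofPred_eq] at hs
        simp only [Finset.coe_product, Set.mem_prod, Finset.coe_univ, Set.mem_univ, and_true,
          Finset.mem_coe, hG, hS, Finset.mem_filter, Finset.mem_univ, true_and]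
        refine ⟨fun t ht => ?_, ?_, ?_⟩
        · obtain ⟨a1, a2, a3, a4⟩ := hd T (by omega) t ht
          rw [Function.update_of_ne a2, Function.update_of_ne a1, Function.update_of_ne a4,
            Function.update_of_ne a3]
          exact hs t ht
        · by_cases h : A T = B T
          · rw [h]; simp
          · rw [Function.update_of_ne h]; simp
        · simp
      · intro s _ s' _ h
        simp only [Prod.mk.injEq] at h
        obtain ⟨h1, h2, h3⟩ := h
        funext g
        by_cases hA : g = A T
        · rw [hA, h2]
        by_cases hB : g = B T
        · rw [hB, h3]
        have := congrFun h1 g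
        rwa [Function.update_of_ne hB, Function.update_of_ne hA, Function.update_of_ne hB,
            Function.update_of_ne hA] at this
    rw [Finset.card_product, Finset.card_univ, Fintype.card_prod, Fintype.card_fin] at h2
    have hsub : G ⊆ S := Finset.filter_subset _ _
    rw [h1, Finset.cast_card_sdiff hsub]
    have h2' : (S.card : ℝ) ≤ G.card * ((p : ℝ) * p) := by exact_mod_cast h2
    have hp' : (1 : ℝ) ≤ p := by exact_mod_cast hp
    have h3 : (S.card : ℝ) * (1 / (p : ℝ) ^ 2) ≤ G.card := by
      rw [mul_one_div, div_le_iff₀ (by positivity)]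
      nlinarith
    have h4 : (0 : ℝ) ≤ 1 - 1 / (p : ℝ) ^ 2 := by
      have : 1 / (p : ℝ) ^ 2 ≤ 1 := by
        rw [div_le_one (by positivity)]; nlinarith
      linarith
    calc (S.card : ℝ) - G.card ≤ S.card * (1 - 1 / (p : ℝ) ^ 2) := by linarith
      _ ≤ ((p : ℝ) ^ M * (1 - 1 / (p : ℝ) ^ 2) ^ T) * (1 - 1 / (p : ℝ) ^ 2) :=
        mul_le_mul_of_nonneg_right ih' h4
      _ = _ := by ring

lemma upper_aux (ε : ℝ) (h0 : 0 < ε) (h1 : ε ≤ 1 / 2) (k : ℕ) (hk : 1 ≤ k) (r : ℕ) :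
    ∀ (S : Finset ℕ), S.card = r + 1 → ∀ (N : ℕ), (k : ℝ) ^ (r + 1) / ε ^ r ≤ N →
    ∀ (χ : ℤ → ℕ) (A : ℤ), (∀ y, A < y → y ≤ A + N → χ y ∈ S) →
    ∃ x : ℕ → ℤ, (∀ i < k, A < x i ∧ x i ≤ A + N) ∧
      (∀ i < k, ∀ j < k, χ (x i) = χ (x j)) ∧ IsAPeps ε k x := by
  have hk' : (1 : ℝ) ≤ k := by exact_mod_cast hk
  induction r with
  | zero =>
    intro S hS N hN χ A hχ
    obtain ⟨s, rfl⟩ := Finset.card_eq_one.mp hS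
    simp at hN
    have hr : ∀ i < k, A < A + 1 + (i : ℤ) ∧ A + 1 + (i : ℤ) ≤ A + N := by
      intro i hi; constructor <;> omega
    refine ⟨fun i => A + 1 + i, hr, ?_, A + 1, 1, one_pos, ?_⟩
    · intro i hi j hj
      have := hχ _ (hr i hi).1 (hr i hi).2
      have := hχ _ (hr j hj).1 (hr j hj).2
      simp_all
    · intro i hi
      push_cast
      simp [h0]
  | succ r ih =>
    intro S hS N hN χ A hχ
    obtain ⟨s, hs⟩ : S.Nonempty := Finset.card_pos.mp (by omega)
    set X : ℝ := (k : ℝ) ^ (r + 1) / ε ^ r with hX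
    have hX1 : 1 ≤ X := by
      rw [hX, le_div_iff₀ (by positivity)]
      have a1 : ε ^ r ≤ 1 := pow_le_one₀ h0.le (by linarith)
      have a2 : 1 ≤ (k : ℝ) ^ (r + 1) := one_le_pow₀ hk'
      linarith
    have hXN : k * (X / ε) ≤ N := by
      have : k * (X / ε) = (k : ℝ) ^ (r + 1 + 1) / ε ^ (r + 1) := by
        rw [hX]; field_simp; ring
      linarith
    set L : ℕ := ⌈X⌉₊ with hL
    have hL1 : X ≤ L := Nat.le_ceil X
    have hL2 : (L : ℝ) < X + 1 := Nat.ceil_lt_add_one (by linarith)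
    have hXe : 2 * X ≤ X / ε := by
      rw [le_div_iff₀ h0]; nlinarith
    have hXpos : 0 < X / ε := by positivity
    have key : ∀ i < k, (0 : ℝ) ≤ i * (X / ε) ∧ i * (X / ε) + 2 * X ≤ N := by
      intro i hi
      refine ⟨by positivity, ?_⟩
      have : (i : ℝ) + 1 ≤ k := by exact_mod_cast hi
      nlinarith
    by_cases hc : ∀ i < k, ∃ y : ℤ, χ y = s ∧ A + i * (X / ε) < y ∧ (y : ℝ) < A + i * (X / ε) + 2 * X
    · choose! x hx using hc
      refine ⟨x, ?_, ?_, A + X, X / ε, by positivity, ?_⟩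
      · intro i hi
        obtain ⟨_, b, c⟩ := hx i hi
        obtain ⟨d, e⟩ := key i hi
        constructor
        · have : (A : ℝ) < x i := by linarith
          exact_mod_cast this
        · have : (x i : ℝ) ≤ A + N := by linarith
          exact_mod_cast this
      · intro i hi j hj
        rw [(hx i hi).1, (hx j hj).1]
      · intro i hi
        obtain ⟨_, b, c⟩ := hx i hi
        rw [mul_div_cancel₀ _ h0.ne', abs_lt]
        constructor <;> linarith
    · push Not at hc
      obtain ⟨i, hi, hc⟩ := hc
      obtain ⟨d, e⟩ := key i hi
      set A' : ℤ := ⌊A + i * (X / ε)⌋ with hA'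
      have f1 : (A' : ℝ) ≤ A + i * (X / ε) := Int.floor_le _
      have f2 : A + i * (X / ε) < A' + 1 := Int.lt_floor_add_one _
      have f3 : A ≤ A' := by rw [hA', Int.le_floor]; linarith
      have f4 : A' + L ≤ A + N := by
        have : ((A' + L : ℤ) : ℝ) ≤ (A + N : ℤ) := by push_cast; linarith
        exact_mod_cast this
      obtain ⟨x, hx1, hx2, hx3⟩ := ih (S.erase s) (by rw [Finset.card_erase_of_mem hs]; omega) L hL1
        χ A' (by
          intro y hy1 hy2
          refine Finset.mem_erase.mpr ⟨?_, hχ y (by omega) (by omega)⟩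
          intro h
          have g1 : (A' : ℝ) + 1 ≤ y := by exact_mod_cast hy1
          have g2 : (y : ℝ) ≤ A' + L := by exact_mod_cast hy2
          have := hc y h (by linarith)
          linarith)
      refine ⟨x, fun i hi => ?_, hx2, hx3⟩
      have := hx1 i hi
      constructor <;> omega

lemma upper (ε : ℝ) (h0 : 0 < ε) (h1 : ε ≤ 1 / 2) (k : ℕ) (hk : 1 ≤ k) (r N : ℕ)
    (hN : (k : ℝ) ^ (r + 1) / ε ^ r ≤ N) : HasMonoAPeps ε k (r + 1) N := by
  intro c
  obtain ⟨x, hx1, hx2, hx3⟩ := upper_aux ε h0 h1 k hk r (Finset.range (r + 1)) (by simp) N hN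
    (fun y => (c y : ℕ)) 0 (by intro y _ _; simp; omega)
  refine ⟨x, fun i hi => ?_, fun i hi j hj => Fin.ext (hx2 i hi j hj), hx3⟩
  have := hx1 i hi
  rw [Finset.mem_Icc]; constructor <;> omega


/-- missing colour of block b -/
def misCol (r M : ℕ) (s : Fin (M + 1) → Fin (2 * (r + 1))) (b : ℕ) : Fin (r + 1) :=
  ⟨((b + (s (Fin.ofNat (M + 1) (b / (2 * (r + 1)))) : ℕ)) % (2 * (r + 1))) / 2, by
    have : (b + (s (Fin.ofNat (M + 1) (b / (2 * (r + 1)))) : ℕ)) % (2 * (r + 1)) < 2 * (r + 1) :=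
      Nat.mod_lt _ (by omega)
    omega⟩

lemma misCol_cover (r M : ℕ) (s : Fin (M + 1) → Fin (2 * (r + 1))) (j : Fin (r + 1)) (g : ℕ) :
    ∃ b, 2 * (r + 1) * g ≤ b ∧ b < 2 * (r + 1) * (g + 1) ∧ misCol r M s b = j := by
  obtain ⟨p, hp⟩ : ∃ p, p = 2 * (r + 1) := ⟨_, rfl⟩
  obtain ⟨σ, hσ⟩ : ∃ σ : ℕ, σ = (s (Fin.ofNat (M + 1) g) : ℕ) := ⟨_, rfl⟩
  have hσl : σ < p := by rw [hσ, hp]; exact (s (Fin.ofNat (M + 1) g)).2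
  have hj : (j : ℕ) < r + 1 := j.2
  set i := (2 * (j : ℕ) + (p - σ)) % p with hi
  have hil : i < p := Nat.mod_lt _ (by omega)
  refine ⟨p * g + i, by rw [← hp]; omega, by rw [← hp, mul_add]; omega, ?_⟩
  apply Fin.ext
  have h1 : (p * g + i) / p = g := by
    rw [Nat.mul_add_div (by omega), Nat.div_eq_of_lt hil, add_zero]
  have h3 : (misCol r M s (p * g + i) : ℕ) = ((p * g + i + σ) % p) / 2 := by
    rw [hp] at h1
    rw [hp] at hi ⊢
    simp only [misCol]
    rw [h1, hσ]
  rw [h3]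
  have h2 : (p * g + i + (σ : ℕ)) % p = 2 * (j : ℕ) := by
    rw [add_assoc, Nat.mul_add_mod, hi, Nat.mod_add_mod]
    have : 2 * (j : ℕ) + (p - σ) + σ = 2 * j + p := by omega
    rw [this, Nat.add_mod_right, Nat.mod_eq_of_lt (by omega)]
  rw [h2]; omega

/-- target shift -/
def tgt (r : ℕ) (j : Fin (r + 1)) (b : ℕ) : Fin (2 * (r + 1)) :=
  ⟨(2 * (j : ℕ) + (2 * r + 1) * b) % (2 * (r + 1)), Nat.mod_lt _ (by omega)⟩

lemma misCol_kill (r M : ℕ) (s : Fin (M + 1) → Fin (2 * (r + 1))) (j : Fin (r + 1)) (b : ℕ)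
    (h1 : s (Fin.ofNat (M + 1) (b / (2 * (r + 1)))) = tgt r j b)
    (h2 : s (Fin.ofNat (M + 1) ((b + 1) / (2 * (r + 1)))) = tgt r j b) :
    misCol r M s b = j ∧ misCol r M s (b + 1) = j := by
  have hj : (j : ℕ) < r + 1 := j.2
  have h3 : (b + (tgt r j b : ℕ)) % (2 * (r + 1)) = 2 * j := by
    simp only [tgt]
    rw [Nat.add_mod_mod]
    have : b + (2 * (j : ℕ) + (2 * r + 1) * b) = 2 * j + 2 * (r + 1) * b := by ring
    rw [this, Nat.add_mul_mod_self_left, Nat.mod_eq_of_lt (by omega)]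
  have h4 : (b + 1 + (tgt r j b : ℕ)) % (2 * (r + 1)) = 2 * j + 1 := by
    have : b + 1 + (tgt r j b : ℕ) = (b + (tgt r j b : ℕ)) + 1 := by ring
    rw [this, Nat.add_mod, h3, Nat.mod_eq_of_lt (a := 1) (by omega), Nat.mod_eq_of_lt (by omega)]
  constructor
  · apply Fin.ext
    simp only [misCol]
    rw [h1, h3]; omega
  · apply Fin.ext
    simp only [misCol]
    rw [h2, h4]; omega

/-- combined colouring -/
def bigCol (r M n : ℕ) (χ : ℤ → Fin r) (s : Fin (M + 1) → Fin (2 * (r + 1))) (x : ℤ) :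
    Fin (r + 1) :=
  (misCol r M s (x.toNat / n)).succAbove (χ (((x.toNat % n : ℕ) : ℤ) + 1))

lemma caseA (ε : ℝ) (h1 : ε ≤ 1 / 4) (r M n k k' : ℕ) (hn : 1 ≤ n) (χ : ℤ → Fin r)
    (s : Fin (M + 1) → Fin (2 * (r + 1))) (hχ : GoodCol ε k' r n χ)
    (hk : 2 * (2 * (r + 1)) * k' + 1 ≤ k) (x : ℕ → ℤ) (hx : ∀ i < k, 1 ≤ x i)
    (hm : ∀ i < k, ∀ j < k, bigCol r M n χ s (x i) = bigCol r M n χ s (x j))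
    (a d : ℝ) (hd : 0 < d) (hdn : d ≤ n / 2)
    (hap : ∀ i < k, |(x i : ℝ) - (a + (i : ℝ) * d)| < ε * d) : False := by
  have hstep : ∀ i, i + 1 < k → x i < x (i + 1) ∧ x (i + 1) ≤ x i + n := by
    intro i hi
    have a1 := abs_lt.mp (hap i (by omega))
    have a2 := abs_lt.mp (hap (i + 1) hi)
    push_cast at a2
    have h3 : ε * d ≤ 1 / 4 * d := mul_le_mul_of_nonneg_right h1 hd.le
    constructor
    · have : (x i : ℝ) < x (i + 1) := by nlinarith
      exact_mod_cast this
    · have : (x (i + 1) : ℝ) ≤ x i + n := by nlinarith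
      exact_mod_cast this
  set B : ℕ → ℕ := fun i => (x i).toNat / n with hB
  have hBs : ∀ i, i + 1 < k → B i ≤ B (i + 1) ∧ B (i + 1) ≤ B i + 1 := by
    intro i hi
    obtain ⟨b1, b2⟩ := hstep i hi
    have b3 := hx i (by omega)
    constructor
    · exact Nat.div_le_div_right (by omega)
    · have : (x (i + 1)).toNat / n ≤ ((x i).toNat + n) / n := Nat.div_le_div_right (by omega)
      rwa [Nat.add_div_right _ (by omega)] at this
  have hBm : ∀ e i, i + e < k → B i ≤ B (i + e) := by
    intro e
    induction e with
    | zero => intro i _; simp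
    | succ e ih =>
      intro i hi
      exact (ih i (by omega)).trans (hBs (i + e) (by omega)).1
  have hivt : ∀ j, j < k → ∀ β, B 0 ≤ β → β ≤ B j → ∃ i ≤ j, B i = β := by
    intro j
    induction j with
    | zero => intro _ β h2 h3; exact ⟨0, le_rfl, by omega⟩
    | succ j ih =>
      intro hj β h2 h3
      by_cases h4 : β ≤ B j
      · obtain ⟨i, hi, h5⟩ := ih (by omega) β h2 h4
        exact ⟨i, by omega, h5⟩
      · exact ⟨j + 1, le_rfl, by have := hBs j hj; omega⟩
  have hne : ∀ i < k, misCol r M s (B i) ≠ bigCol r M n χ s (x 0) := by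
    intro i hi
    rw [hm 0 (by omega) i hi]
    exact (Fin.succAbove_ne _ _).symm
  obtain ⟨p, hp⟩ : ∃ p, p = 2 * (r + 1) := ⟨_, rfl⟩
  rw [← hp] at hk
  have hspan : B (2 * p * k') < B 0 + 2 * p := by
    by_contra hcon
    push Not at hcon
    obtain ⟨b, c1, c2, c3⟩ := misCol_cover r M s (bigCol r M n χ s (x 0)) (B 0 / p + 1)
    rw [← hp] at c1 c2
    have e1 := Nat.div_add_mod (B 0) p
    have e2 := Nat.mod_lt (B 0) (show p > 0 by omega)
    simp only [mul_add, mul_one] at c1 c2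
    obtain ⟨i, hi, hi2⟩ := hivt (2 * p * k') (by omega) b (by omega) (by omega)
    apply hne i (by omega)
    rw [hi2, c3]
  have hex : ∃ t < 2 * p, B (t * k' + k') = B (t * k') := by
    by_contra hcon
    push Not at hcon
    have : ∀ t ≤ 2 * p, B 0 + t ≤ B (t * k') := by
      intro t
      induction t with
      | zero => intro _; simp
      | succ t ih =>
        intro ht
        have i1 := ih (by omega)
        have i2 := hcon t (by omega)
        have i4 : (t + 1) * k' ≤ 2 * p * k' := Nat.mul_le_mul_right _ ht
        have i5 : (t + 1) * k' = t * k' + k' := by ring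
        have i3 := hBm k' (t * k') (by omega)
        rw [i5]; omega
    have := this (2 * p) le_rfl
    omega
  obtain ⟨t, ht, hteq⟩ := hex
  set i0 := t * k' with hi0
  have hlt : i0 + k' < k := by
    have i4 : (t + 1) * k' ≤ 2 * p * k' := Nat.mul_le_mul_right _ ht
    have i5 : (t + 1) * k' = t * k' + k' := by ring
    omega
  have hconst : ∀ i < k', B (i0 + i) = B i0 := by
    intro i hi
    have a1 := hBm i i0 (by omega)
    have a2 := hBm (k' - i) (i0 + i) (by omega)
    have : i0 + i + (k' - i) = i0 + k' := by omega
    rw [this] at a2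
    omega
  have hdec : ∀ i < k', ((((x (i0 + i)).toNat % n : ℕ) : ℤ) + 1) = x (i0 + i) - n * (B i0 : ℕ) + 1 := by
    intro i hi
    have a1 := Nat.div_add_mod (x (i0 + i)).toNat n
    have a2 : (x (i0 + i)).toNat / n = B i0 := hconst i hi
    rw [a2] at a1
    have a3 := hx (i0 + i) (by omega)
    have a4 : (((x (i0 + i)).toNat : ℕ) : ℤ) = x (i0 + i) := Int.toNat_of_nonneg (by omega)
    have a5 : ((n * B i0 + (x (i0 + i)).toNat % n : ℕ) : ℤ) = x (i0 + i) := by rw [a1, a4]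
    push_cast at a5 ⊢
    linarith
  refine hχ (fun i => (((x (i0 + i)).toNat % n : ℕ) : ℤ) + 1) ?_ ?_ ?_
  · intro i hi
    have := Nat.mod_lt (x (i0 + i)).toNat (show n > 0 by omega)
    rw [Finset.mem_Icc]; constructor <;> omega
  · intro i hi j hj
    have := hm (i0 + i) (by omega) (i0 + j) (by omega)
    simp only [bigCol] at this
    have e1 : (x (i0 + i)).toNat / n = B i0 := hconst i hi
    have e2 : (x (i0 + j)).toNat / n = B i0 := hconst j hj
    rw [e1, e2] at this
    exact Fin.succAbove_right_injective this
  · refine ⟨a + i0 * d - n * (B i0 : ℕ) + 1, d, hd, ?_⟩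
    intro i hi
    have := hap (i0 + i) (by omega)
    simp only
    rw [hdec i hi]
    convert this using 2
    push_cast
    ring

lemma near (ε : ℝ) (h0 : 0 < ε) (h1 : ε ≤ 1 / 4) (k : ℕ) (hk : 2 ≤ k) (x : ℕ → ℤ) (a d : ℝ)
    (hd : 0 < d) (hap : ∀ i < k, |(x i : ℝ) - (a + (i : ℝ) * d)| < ε * d) (D : ℝ)
    (hD : D = ((x (k - 1) : ℝ) - x 0) / ((k : ℝ) - 1)) :
    d / 2 ≤ D ∧ ∀ i < k, |(x i : ℝ) - (x 0 + i * D)| < 4 * ε * D := by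
  have hk2 : (2 : ℝ) ≤ k := by exact_mod_cast hk
  have hk1 : (0 : ℝ) < (k : ℝ) - 1 := by linarith
  have e0 := abs_lt.mp (hap 0 (by omega))
  have e1 := abs_lt.mp (hap (k - 1) (by omega))
  rw [Nat.cast_sub (by omega)] at e1
  push_cast at e0 e1
  have hDk : D * ((k : ℝ) - 1) = (x (k - 1) : ℝ) - x 0 := by rw [hD]; field_simp
  have hed : ε * d ≤ 1 / 4 * d := mul_le_mul_of_nonneg_right h1 hd.le
  have hdD : d / 2 ≤ D := by
    by_contra hcon
    push Not at hcon
    have : D * ((k : ℝ) - 1) < d / 2 * ((k : ℝ) - 1) := mul_lt_mul_of_pos_right hcon hk1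
    nlinarith
  refine ⟨hdD, fun i hi => ?_⟩
  have ei := abs_lt.mp (hap i hi)
  have hik : (i : ℝ) ≤ (k : ℝ) - 1 := by
    have : (i : ℝ) + 1 ≤ k := by exact_mod_cast hi
    linarith
  set l : ℝ := i / ((k : ℝ) - 1) with hl
  have l0 : 0 ≤ l := by positivity
  have l1 : l ≤ 1 := by rw [hl, div_le_one hk1]; exact hik
  have hil : (i : ℝ) = l * ((k : ℝ) - 1) := by rw [hl]; field_simp
  have hiD : (i : ℝ) * D = l * ((x (k - 1) : ℝ) - x 0) := by rw [hil, ← hDk]; ring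
  have h2 : 2 * (ε * d) ≤ 4 * ε * D := by nlinarith
  rw [hiD]
  have hid : (i : ℝ) * d = l * (((k : ℝ) - 1) * d) := by rw [hil]; ring
  rw [hid] at ei
  set w := ((k : ℝ) - 1) * d
  rw [abs_lt]
  constructor
  · nlinarith [mul_le_mul_of_nonneg_left e0.2.le (sub_nonneg.mpr l1), mul_le_mul_of_nonneg_left e1.2.le l0]
  · nlinarith [mul_le_mul_of_nonneg_left e0.1.le (sub_nonneg.mpr l1), mul_le_mul_of_nonneg_left e1.1.le l0]

lemma blk_near (x : ℤ) (z ρ : ℝ) (n : ℕ) (hn : 1 ≤ n) (hx : 1 ≤ x) (h0 : 0 ≤ z - ρ) (h : |(x : ℝ) - z| < ρ)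
    (h2 : 2 * ρ ≤ n) : x.toNat / n = ⌊(z - ρ) / n⌋₊ ∨ x.toNat / n = ⌊(z - ρ) / n⌋₊ + 1 := by
  have hn' : (0 : ℝ) < n := by exact_mod_cast hn
  obtain ⟨h3, h4⟩ := abs_lt.mp h
  have hxx : ((x.toNat : ℕ) : ℝ) = x := by
    have : ((x.toNat : ℕ) : ℤ) = x := Int.toNat_of_nonneg (by omega)
    exact_mod_cast this
  rw [← Nat.floor_div_eq_div (K := ℝ), hxx]
  have a1 : ⌊(z - ρ) / n⌋₊ ≤ ⌊(x : ℝ) / n⌋₊ := by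
    apply Nat.floor_le_floor
    gcongr; linarith
  have a2 : ⌊(x : ℝ) / n⌋₊ ≤ ⌊(z - ρ) / n⌋₊ + 1 := by
    rw [← Nat.floor_add_one (by positivity)]
    apply Nat.floor_le_floor
    rw [div_add_one hn'.ne']
    gcongr; linarith
  omega


/-- expected block index -/
noncomputable def bix (ε : ℝ) (k n : ℕ) (u v : ℤ) (i : ℕ) : ℕ :=
  ⌊((u : ℝ) + i * (((v : ℝ) - u) / ((k : ℝ) - 1)) - 4 * ε * (((v : ℝ) - u) / ((k : ℝ) - 1))) / n⌋₊

/-- the bad event -/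
def Bad (ε : ℝ) (k n r M K T : ℕ) (u v : ℤ) (j : Fin (r + 1))
    (s : Fin (M + 1) → Fin (2 * (r + 1))) : Prop :=
  ∀ t < T, ¬ (s (Fin.ofNat (M + 1) (bix ε k n u v ((t + 1) * K) / (2 * (r + 1)))) =
      tgt r j (bix ε k n u v ((t + 1) * K)) ∧
    s (Fin.ofNat (M + 1) ((bix ε k n u v ((t + 1) * K) + 1) / (2 * (r + 1)))) =
      tgt r j (bix ε k n u v ((t + 1) * K)))

lemma caseB (ε : ℝ) (h0 : 0 < ε) (h1 : ε ≤ 1 / 4) (r M n k K T : ℕ) (hn : 1 ≤ n) (hk : 2 ≤ k)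
    (hK : 1 ≤ K) (hT : T * K ≤ k - 1) (χ : ℤ → Fin r)
    (s : Fin (M + 1) → Fin (2 * (r + 1))) (x : ℕ → ℤ) (hx : ∀ i < k, 1 ≤ x i)
    (hm : ∀ i < k, ∀ j < k, bigCol r M n χ s (x i) = bigCol r M n χ s (x j))
    (a d : ℝ) (hd : 0 < d)
    (hap : ∀ i < k, |(x i : ℝ) - (a + (i : ℝ) * d)| < ε * d)
    (hDn : 8 * ε * (((x (k - 1) : ℝ) - x 0) / ((k : ℝ) - 1)) ≤ n) :
    Bad ε k n r M K T (x 0) (x (k - 1)) (bigCol r M n χ s (x 0)) s := by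
  intro t ht hkill
  obtain ⟨D, hD⟩ : ∃ D : ℝ, D = ((x (k - 1) : ℝ) - x 0) / ((k : ℝ) - 1) := ⟨_, rfl⟩
  obtain ⟨n1, n2⟩ := near ε h0 h1 k hk x a d hd hap D hD
  have hD0 : 0 < D := by linarith
  have hi1 : (t + 1) * K ≤ T * K := Nat.mul_le_mul_right _ ht
  have hi2 : 1 ≤ (t + 1) * K := Nat.mul_pos (by omega) hK
  obtain ⟨i, hi⟩ : ∃ i, i = (t + 1) * K := ⟨_, rfl⟩
  rw [← hi] at hkill hi1 hi2
  have hik : i < k := by omega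
  obtain ⟨c1, c2⟩ := misCol_kill r M s _ _ hkill.1 hkill.2
  have hx0 : (1 : ℝ) ≤ x 0 := by exact_mod_cast hx 0 (by omega)
  have hi3 : (1 : ℝ) ≤ i := by exact_mod_cast hi2
  have hb := blk_near (x i) (x 0 + i * D) (4 * ε * D) n hn (hx i hik)
    (by nlinarith [mul_le_mul_of_nonneg_right hi3 hD0.le, mul_le_mul_of_nonneg_right h1 hD0.le])
    (n2 i hik) (by rw [hD]; linarith)
  have hbix : bix ε k n (x 0) (x (k - 1)) i = ⌊((x 0 : ℝ) + i * D - 4 * ε * D) / n⌋₊ := by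
    rw [hD]; rfl
  rw [hbix] at c1 c2
  have hne : misCol r M s ((x i).toNat / n) ≠ bigCol r M n χ s (x 0) := by
    rw [hm 0 (by omega) i hik]
    exact (Fin.succAbove_ne _ _).symm
  rcases hb with hb | hb <;> rw [hb] at hne
  · exact hne c1
  · exact hne c2

set_option maxHeartbeats 1600000 in
lemma bad_card (ε : ℝ) (h0 : 0 < ε) (h1 : ε ≤ 1 / 4) (r N n k T : ℕ) (hn : 1 ≤ n) (hk : 2 ≤ k)
    (hT : T * (4 * (2 * (r + 1) + 1)) ≤ k - 1) (u v : ℤ) (hu : 1 ≤ u) (hv : v ≤ N)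
    (hD1 : (n : ℝ) / 4 ≤ ((v : ℝ) - u) / ((k : ℝ) - 1)) (j : Fin (r + 1)) :
    open Classical in
    ((Finset.univ.filter (fun s : Fin (N + 1 + 1) → Fin (2 * (r + 1)) =>
      Bad ε k n r (N + 1) (4 * (2 * (r + 1) + 1)) T u v j s)).card : ℝ) ≤
      ((2 * (r + 1) : ℕ) : ℝ) ^ (N + 1 + 1) * (1 - 1 / ((2 * (r + 1) : ℕ) : ℝ) ^ 2) ^ T := by
  classical
  obtain ⟨D, hD⟩ : ∃ D : ℝ, D = ((v : ℝ) - u) / ((k : ℝ) - 1) := ⟨_, rfl⟩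
  have hn' : (1 : ℝ) ≤ n := by exact_mod_cast hn
  have hk2 : (2 : ℝ) ≤ k := by exact_mod_cast hk
  have hk1 : (0 : ℝ) < (k : ℝ) - 1 := by linarith
  rw [← hD] at hD1
  have hD0 : 0 < D := by linarith
  have hDk : D * ((k : ℝ) - 1) = (v : ℝ) - u := by rw [hD]; field_simp
  set K := 4 * (2 * (r + 1) + 1) with hK
  have hu' : (1 : ℝ) ≤ u := by exact_mod_cast hu
  have hv' : (v : ℝ) ≤ N := by exact_mod_cast hv
  set b : ℕ → ℕ := fun t => bix ε k n u v ((t + 1) * K) with hb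
  have hbe : ∀ t, b t = ⌊((u : ℝ) + ((t + 1 : ℕ) * K : ℝ) * D - 4 * ε * D) / n⌋₊ := by
    intro t; simp only [hb, bix, hD]; push_cast; rfl
  have hεD : 4 * ε * D ≤ D := by nlinarith
  have hKr : (K : ℝ) = 4 * (2 * (r + 1) + 1) := by rw [hK]; push_cast; ring
  have hK1 : (1 : ℝ) ≤ K := by rw [hKr]; have : (0 : ℝ) ≤ r := by positivity
                               linarith
  have hpos : ∀ t : ℕ, 0 ≤ ((u : ℝ) + ((t + 1 : ℕ) * K : ℝ) * D - 4 * ε * D) / n := by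
    intro t
    apply div_nonneg _ (by linarith)
    have : (1 : ℝ) ≤ ((t + 1 : ℕ) * K : ℝ) := by
      have : (1 : ℝ) ≤ ((t + 1 : ℕ) : ℝ) := by exact_mod_cast Nat.le_add_left 1 t
      nlinarith
    nlinarith
  have hbN : ∀ t < T, b t ≤ N := by
    intro t ht
    rw [hbe]
    apply Nat.floor_le_of_le
    rw [div_le_iff₀ (by linarith)]
    have e1 : ((t + 1 : ℕ) * K : ℝ) ≤ (k : ℝ) - 1 := by
      have : (t + 1) * K + 1 ≤ k := by
        have : (t + 1) * K ≤ T * K := Nat.mul_le_mul_right _ ht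
        omega
      have : (((t + 1) * K + 1 : ℕ) : ℝ) ≤ k := by exact_mod_cast this
      push_cast at this ⊢
      linarith
    have e2 : ((t + 1 : ℕ) * K : ℝ) * D ≤ ((k : ℝ) - 1) * D := mul_le_mul_of_nonneg_right e1 hD0.le
    have e3 : (N : ℝ) * 1 ≤ N * n := mul_le_mul_of_nonneg_left hn' (by positivity)
    have e4 : 0 < 4 * ε * D := by positivity
    linarith
  have hsep : ∀ t' t, t' < t → b t' + 2 * (r + 1) + 1 ≤ b t := by
    intro t' t htt
    rw [hbe t]
    apply Nat.le_floor
    have f1 : (b t' : ℝ) ≤ ((u : ℝ) + ((t' + 1 : ℕ) * K : ℝ) * D - 4 * ε * D) / n := by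
      rw [hbe t']; exact Nat.floor_le (hpos t')
    rw [le_div_iff₀ (by linarith)] at f1 ⊢
    have f2 : ((t' + 1 : ℕ) : ℝ) + 1 ≤ ((t + 1 : ℕ) : ℝ) := by
      exact_mod_cast (by omega : t' + 1 + 1 ≤ t + 1)
    have f3 : (((t' + 1 : ℕ) : ℝ) + 1) * (K * D) ≤ ((t + 1 : ℕ) : ℝ) * (K * D) :=
      mul_le_mul_of_nonneg_right f2 (by positivity)
    have f4 : (2 * ((r : ℝ) + 1) + 1) * n ≤ K * D := by
      rw [hKr]
      have : (0 : ℝ) ≤ 2 * ((r : ℝ) + 1) + 1 := by positivity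
      nlinarith
    push_cast at f1 f3 ⊢
    nlinarith
  have hdiv : ∀ t' t, t' < t → (b t' + 1) / (2 * (r + 1)) < b t / (2 * (r + 1)) := by
    intro t' t htt
    have g1 := hsep t' t htt
    have g2 : (b t' + 1 + 2 * (r + 1)) / (2 * (r + 1)) ≤ b t / (2 * (r + 1)) :=
      Nat.div_le_div_right (by omega)
    rw [Nat.add_div_right _ (by omega)] at g2
    omega
  have hlt : ∀ t < T, (b t + 1) / (2 * (r + 1)) < N + 1 + 1 := by
    intro t ht
    have := hbN t ht
    have := Nat.div_le_self (b t + 1) (2 * (r + 1))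
    omega
  have hmono : ∀ t, b t / (2 * (r + 1)) ≤ (b t + 1) / (2 * (r + 1)) := fun t =>
    Nat.div_le_div_right (by omega)
  have hfin : ∀ g h : ℕ, g < h → h < N + 1 + 1 → Fin.ofNat (N + 1 + 1) g ≠ Fin.ofNat (N + 1 + 1) h := by
    intro g h h1 h2 h3
    have := congrArg Fin.val h3
    simp only [Fin.val_ofNat] at this
    rw [Nat.mod_eq_of_lt (by omega), Nat.mod_eq_of_lt (by omega)] at this
    omega
  have hfinal := count_avoid (by omega) (fun t => Fin.ofNat (N + 1 + 1) (b t / (2 * (r + 1))))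
    (fun t => Fin.ofNat (N + 1 + 1) ((b t + 1) / (2 * (r + 1)))) (fun t => tgt r j (b t)) T (by
    intro t ht t' htt
    have k1 := hdiv t' t htt
    have k2 := hlt t ht
    have k3 := hmono t
    have k4 := hmono t'
    refine ⟨hfin _ _ ?_ ?_, hfin _ _ ?_ ?_, hfin _ _ ?_ ?_, hfin _ _ ?_ ?_⟩ <;> omega)
  refine le_trans (Nat.cast_le.mpr (Finset.card_le_card fun s hs => ?_)) hfinal
  exact Finset.mem_filter.mpr ⟨Finset.mem_univ _, (Finset.mem_filter.mp hs).2⟩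

lemma numeric (r : ℕ) (C e : ℕ) (q : ℝ) (hq0 : 0 ≤ q) (hq1 : q < 1) (hC : 1 ≤ C) : ∃ K0 : ℕ, ∀ k ≥ K0,
    ((k : ℝ) ^ e) * (r + 1) * q ^ ((k - 1) / C) < 1 := by
  have h1 := tendsto_pow_const_mul_const_pow_of_abs_lt_one e (r := q) (by rwa [abs_of_nonneg hq0])
  have h2 := h1.const_mul ((2 * (C : ℝ)) ^ e * (r + 1))
  rw [mul_zero] at h2
  have h3 := h2.eventually (gt_mem_nhds (show (0 : ℝ) < 1 by norm_num))
  obtain ⟨T0, hT0⟩ := Filter.eventually_atTop.mp h3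
  refine ⟨(T0 + 1) * C + 1, fun k hk => ?_⟩
  set T := (k - 1) / C with hT
  have hT1 : T0 + 1 ≤ T := by
    rw [hT, Nat.le_div_iff_mul_le (by omega)]; omega
  have hkT : k ≤ 2 * C * T := by
    have := Nat.lt_div_mul_add (a := k - 1) (b := C) (by omega)
    rw [← hT] at this
    have h5 : C * 1 ≤ C * T := Nat.mul_le_mul_left _ (by omega)
    have h6 : 2 * C * T = T * C + C * T := by ring
    omega
  have hk' : (k : ℝ) ≤ 2 * C * T := by exact_mod_cast hkT
  calc (k : ℝ) ^ e * (r + 1) * q ^ T ≤ (2 * C * T) ^ e * (r + 1) * q ^ T := by gcongr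
    _ = (2 * (C : ℝ)) ^ e * (r + 1) * ((T : ℝ) ^ e * q ^ T) := by rw [mul_pow]; ring
    _ < 1 := hT0 T (by omega)

lemma exists_good (ε : ℝ) (h0 : 0 < ε) (h1 : ε ≤ 1 / 4) (r N n k T : ℕ) (hn : 1 ≤ n) (hk : 2 ≤ k)
    (hT : T * (4 * (2 * (r + 1) + 1)) ≤ k - 1)
    (hnum : (N : ℝ) ^ 2 * (r + 1) * (1 - 1 / ((2 * (r + 1) : ℕ) : ℝ) ^ 2) ^ T < 1) :
    ∃ s : Fin (N + 1 + 1) → Fin (2 * (r + 1)), ∀ u v : ℤ, 1 ≤ u → u ≤ N → 1 ≤ v → v ≤ N →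
      (n : ℝ) / 4 ≤ ((v : ℝ) - u) / ((k : ℝ) - 1) → ∀ j : Fin (r + 1),
      ¬ Bad ε k n r (N + 1) (4 * (2 * (r + 1) + 1)) T u v j s := by
  classical
  by_contra hcon
  push Not at hcon
  set E : Finset ((ℤ × ℤ) × Fin (r + 1)) :=
    ((Finset.Icc (1 : ℤ) N ×ˢ Finset.Icc (1 : ℤ) N) ×ˢ Finset.univ).filter
      (fun e => (n : ℝ) / 4 ≤ ((e.1.2 : ℝ) - e.1.1) / ((k : ℝ) - 1)) with hE
  have hsub : (Finset.univ : Finset (Fin (N + 1 + 1) → Fin (2 * (r + 1)))) ⊆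
      E.biUnion (fun e => Finset.univ.filter (fun s =>
        Bad ε k n r (N + 1) (4 * (2 * (r + 1) + 1)) T e.1.1 e.1.2 e.2 s)) := by
    intro s _
    obtain ⟨u, v, a1, a2, a3, a4, a5, j, a6⟩ := hcon s
    rw [Finset.mem_biUnion]
    refine ⟨((u, v), j), ?_, ?_⟩
    · simp [hE, a1, a2, a3, a4, a5]
    · simpa using a6
  have hc := (Finset.card_le_card hsub).trans Finset.card_biUnion_le
  set W : ℝ := ((2 * (r + 1) : ℕ) : ℝ) ^ (N + 1 + 1) with hW
  have hW0 : 0 < W := by positivity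
  set q : ℝ := (1 - 1 / ((2 * (r + 1) : ℕ) : ℝ) ^ 2) with hq
  have hq0 : 0 ≤ q := by
    have : (1 : ℝ) ≤ ((2 * (r + 1) : ℕ) : ℝ) := by exact_mod_cast (by omega : 1 ≤ 2 * (r + 1))
    have : 1 / ((2 * (r + 1) : ℕ) : ℝ) ^ 2 ≤ 1 := by
      rw [div_le_one (by positivity)]; nlinarith
    rw [hq]; linarith
  have hc1 : W ≤ ∑ e ∈ E, ((Finset.univ.filter (fun s : Fin (N + 1 + 1) → Fin (2 * (r + 1)) =>
        Bad ε k n r (N + 1) (4 * (2 * (r + 1) + 1)) T e.1.1 e.1.2 e.2 s)).card : ℝ) := by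
    have : ((Finset.univ : Finset (Fin (N + 1 + 1) → Fin (2 * (r + 1)))).card : ℝ) = W := by
      rw [Finset.card_univ, Fintype.card_fun, Fintype.card_fin, Fintype.card_fin, hW]; push_cast; rfl
    rw [← this]
    exact_mod_cast hc
  have hc2 : W ≤ ∑ e ∈ E, W * q ^ T := by
    refine hc1.trans (Finset.sum_le_sum fun e he => ?_)
    simp only [hE, Finset.mem_filter, Finset.mem_product, Finset.mem_Icc] at he
    obtain ⟨⟨⟨⟨b1, b2⟩, b3, b4⟩, -⟩, b5⟩ := he
    exact bad_card ε h0 h1 r N n k T hn hk hT e.1.1 e.1.2 b1 b4 b5 e.2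
  rw [Finset.sum_const, nsmul_eq_mul] at hc2
  have hEc : (E.card : ℝ) ≤ (N : ℝ) ^ 2 * (r + 1) := by
    have : E.card ≤ (N * N) * (r + 1) := by
      refine (Finset.card_filter_le _ _).trans ?_
      simp [Finset.card_product]
    calc (E.card : ℝ) ≤ ((N * N * (r + 1) : ℕ) : ℝ) := by exact_mod_cast this
      _ = _ := by push_cast; ring
  have : (E.card : ℝ) * (W * q ^ T) ≤ (N : ℝ) ^ 2 * (r + 1) * (W * q ^ T) :=
    mul_le_mul_of_nonneg_right hEc (by positivity)
  nlinarith


lemma lower_base (ε : ℝ) (h1 : ε ≤ 1 / 4) (k N : ℕ) (hk : 1 ≤ k) (hN : N < k)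
    (χ : ℤ → Fin 1) : GoodCol ε k 1 N χ := by
  rintro x hx - ⟨a, d, hd, hap⟩
  have hstep : ∀ i, i + 1 < k → x i < x (i + 1) := by
    intro i hi
    have a1 := abs_lt.mp (hap i (by omega))
    have a2 := abs_lt.mp (hap (i + 1) hi)
    push_cast at a2
    have h3 : ε * d ≤ 1 / 4 * d := mul_le_mul_of_nonneg_right h1 hd.le
    have : (x i : ℝ) < x (i + 1) := by nlinarith
    exact_mod_cast this
  have hall : ∀ i, i < k → x 0 + i ≤ x i := by
    intro i
    induction i with
    | zero => intro _; simp
    | succ i ih =>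
      intro hi
      have := ih (by omega)
      have := hstep i hi
      push_cast
      omega
  have e1 := hall (k - 1) (by omega)
  have e2 := Finset.mem_Icc.mp (hx 0 (by omega))
  have e3 := Finset.mem_Icc.mp (hx (k - 1) (by omega))
  omega

set_option maxHeartbeats 1600000 in
lemma lower (r : ℕ) : ∃ c K : ℝ, 0 < c ∧ c ≤ 1 ∧ 1 ≤ K ∧ ∀ ε : ℝ, 0 < ε → ε ≤ 1 / 4 →
    ∀ k : ℕ, K / ε ≤ k → ∀ N : ℕ, (N : ℝ) ≤ c * k ^ (r + 1) / ε ^ r →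
      ∃ χ : ℤ → Fin (r + 1), GoodCol ε k (r + 1) N χ := by
  induction r with
  | zero =>
    refine ⟨1 / 2, 1, by norm_num, by norm_num, le_rfl, ?_⟩
    intro ε h0 h1 k hk N hN
    have hk1 : (0 : ℝ) < k := lt_of_lt_of_le (by positivity) hk
    have hk2 : 0 < k := by exact_mod_cast hk1
    refine ⟨fun _ => 0, lower_base ε h1 k N hk2 ?_ _⟩
    simp at hN
    have : (N : ℝ) < k := by linarith
    exact_mod_cast this
  | succ r ih =>
    obtain ⟨c, K, hc0, hc1, hK1, ih⟩ := ih
    -- inner number of colours is r+1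
    obtain ⟨p, hp⟩ : ∃ p : ℕ, p = 2 * (r + 1 + 1) := ⟨_, rfl⟩
    have hp4 : (4 : ℝ) ≤ p := by
      have : 4 ≤ p := by omega
      exact_mod_cast this
    have hq0 : (0 : ℝ) ≤ 1 - 1 / ((2 * (r + 1 + 1) : ℕ) : ℝ) ^ 2 := by
      rw [← hp]
      have : 1 / (p : ℝ) ^ 2 ≤ 1 := by rw [div_le_one (by positivity)]; nlinarith
      linarith
    have hq1 : 1 - 1 / ((2 * (r + 1 + 1) : ℕ) : ℝ) ^ 2 < 1 := by
      rw [← hp]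
      have : 0 < 1 / (p : ℝ) ^ 2 := by positivity
      linarith
    obtain ⟨K0, hK0⟩ := numeric (r + 1) (4 * (2 * (r + 1 + 1) + 1)) (4 * (r + 2)) _ hq0 hq1 (by omega)
    refine ⟨c / (32 * (4 * p) ^ (r + 1)), 8 * p * (K / c) + K0, by positivity, ?_, ?_, ?_⟩
    · rw [div_le_one (by positivity)]
      have : (1 : ℝ) ≤ (4 * p) ^ (r + 1) := one_le_pow₀ (by linarith)
      linarith
    · have : 1 ≤ K / c := by rw [le_div_iff₀ hc0]; linarith
      have : (0 : ℝ) ≤ K0 := by positivity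
      nlinarith
    intro ε h0 h1 k hk N hN
    have hKc : K ≤ K / c := by rw [le_div_iff₀ hc0]; nlinarith
    have hKc' : 1 / c ≤ K / c := by gcongr
    have hKc1 : 1 ≤ K / c := by linarith
    rw [div_le_iff₀ h0] at hk
    have hK0n : (0 : ℝ) ≤ K0 := by positivity
    have hkε : 8 * p * (K / c) ≤ k * ε := by linarith
    have hk0 : (0 : ℝ) ≤ k := by positivity
    have hkk : (k : ℝ) * ε ≤ k := by nlinarith
    have hkK0 : K0 ≤ k := by
      have : (K0 : ℝ) ≤ k := by nlinarith
      exact_mod_cast this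
    have h8pr : 8 * (p : ℝ) ≤ k * ε := by nlinarith
    have h8p : 8 * p ≤ k := by
      have : 8 * (p : ℝ) ≤ k := by linarith
      exact_mod_cast this
    -- inner length
    set k' := (k - 1) / (2 * p) with hk'
    have hk'1 : 2 * p * k' + 1 ≤ k := by
      have := Nat.mul_div_le (k - 1) (2 * p)
      rw [← hk'] at this
      omega
    have hk'2 : k ≤ 4 * p * k' := by
      have := Nat.lt_div_mul_add (a := k - 1) (b := 2 * p) (by omega)
      rw [← hk'] at this
      have e : 4 * p * k' = 2 * (k' * (2 * p)) := by ring
      omega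
    have hk'3 : (k : ℝ) / (4 * p) ≤ k' := by
      rw [div_le_iff₀ (by positivity)]
      have : (k : ℝ) ≤ 4 * p * k' := by exact_mod_cast hk'2
      linarith
    have hk'4 : K / c / ε ≤ k' := by
      refine le_trans ?_ hk'3
      rw [div_le_div_iff₀ h0 (by positivity)]
      nlinarith
    have hk'5 : K / ε ≤ k' := le_trans (by gcongr) hk'4
    have hk'6 : 1 / c ≤ k' := by
      refine le_trans ?_ hk'4
      rw [le_div_iff₀ h0]
      have : 0 < 1 / c := by positivity
      nlinarith
    set Y : ℝ := c * k' ^ (r + 1) / ε ^ r with hY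
    have hY1 : 1 ≤ Y := by
      rw [hY, le_div_iff₀ (by positivity)]
      have a1 : ε ^ r ≤ 1 := pow_le_one₀ h0.le (by linarith)
      have a2 : 1 ≤ c * k' := by
        rw [div_le_iff₀ hc0] at hk'6; linarith
      have a3 : (1 : ℝ) ≤ k' := by nlinarith
      have a4 : (1 : ℝ) ≤ (k' : ℝ) ^ r := one_le_pow₀ a3
      rw [pow_succ]
      nlinarith
    set n := ⌊Y⌋₊ with hn
    have hnY : (n : ℝ) ≤ Y := Nat.floor_le (by linarith)
    have hn1 : 1 ≤ n := by rw [hn, Nat.one_le_floor_iff]; exact hY1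
    have hn2 : Y ≤ 2 * n := by
      have := Nat.lt_floor_add_one Y
      rw [← hn] at this
      have : (1 : ℝ) ≤ n := by exact_mod_cast hn1
      linarith
    obtain ⟨χ, hχ⟩ := ih ε h0 h1 k' hk'5 n hnY
    -- N ≤ k n / (16 ε)
    have hNn : 16 * ε * N ≤ k * n := by
      have b1 : c * (k / (4 * p)) ^ (r + 1) / ε ^ r ≤ Y := by
        rw [hY]; gcongr
      have b2 : c / (32 * (4 * p) ^ (r + 1)) * (k : ℝ) ^ (r + 1 + 1) / ε ^ (r + 1) =
          k * (c * (k / (4 * p)) ^ (r + 1) / ε ^ r) / (32 * ε) := by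
        rw [div_pow]; field_simp; ring
      rw [b2, le_div_iff₀ (by positivity)] at hN
      have b3 : k * (c * (k / (4 * p)) ^ (r + 1) / ε ^ r) ≤ k * (2 * n) := by
        gcongr; linarith
      linarith
    have hNk : (N : ℝ) ≤ k ^ (2 * (r + 2)) := by
      have hek : 1 / ε ≤ k := by rw [div_le_iff₀ h0]; linarith
      have hk1 : (1 : ℝ) ≤ k := by linarith
      have hcc : c / (32 * (4 * p) ^ (r + 1)) ≤ 1 := by
        rw [div_le_one (by positivity)]
        have : (1 : ℝ) ≤ (4 * p) ^ (r + 1) := one_le_pow₀ (by linarith)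
        linarith
      calc (N : ℝ) ≤ c / (32 * (4 * p) ^ (r + 1)) * (k : ℝ) ^ (r + 1 + 1) / ε ^ (r + 1) := hN
        _ = c / (32 * (4 * p) ^ (r + 1)) * (k : ℝ) ^ (r + 1 + 1) * (1 / ε) ^ (r + 1) := by
          rw [one_div, inv_pow]; rfl
        _ ≤ 1 * (k : ℝ) ^ (r + 1 + 1) * k ^ (r + 1) := by gcongr
        _ = k ^ (2 * r + 3) := by ring
        _ ≤ k ^ (2 * (r + 2)) := pow_le_pow_right₀ hk1 (by omega)
    have hk2 : 2 ≤ k := by omega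
    set T := (k - 1) / (4 * (2 * (r + 1 + 1) + 1)) with hT
    have hnum := hK0 k hkK0
    obtain ⟨s, hs⟩ := exists_good ε h0 h1 (r + 1) N n k T hn1 hk2 (Nat.div_mul_le_self _ _) (by
      refine lt_of_le_of_lt ?_ hnum
      have : (N : ℝ) ^ 2 ≤ k ^ (4 * (r + 2)) := by
        calc (N : ℝ) ^ 2 ≤ (k ^ (2 * (r + 2))) ^ 2 := by gcongr
          _ = _ := by rw [← pow_mul]; ring_nf
      gcongr)
    refine ⟨bigCol (r + 1) (N + 1) n χ s, ?_⟩
    rintro x hx hm ⟨a, d, hd, hap⟩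
    have hx1 : ∀ i < k, 1 ≤ x i := fun i hi => (Finset.mem_Icc.mp (hx i hi)).1
    have hx2 : ∀ i < k, x i ≤ N := fun i hi => (Finset.mem_Icc.mp (hx i hi)).2
    rcases le_or_gt d (n / 2) with hdn | hdn
    · exact caseA ε h1 (r + 1) (N + 1) n k k' hn1 χ s hχ (by rw [← hp]; exact hk'1) x hx1 hm a d hd
        hdn hap
    · have hnear := (near ε h0 h1 k hk2 x a d hd hap _ rfl).1
      refine hs (x 0) (x (k - 1)) (hx1 _ (by omega)) (hx2 _ (by omega)) (hx1 _ (by omega))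
        (hx2 _ (by omega)) (by linarith) _
        (caseB ε h0 h1 (r + 1) (N + 1) n k _ T hn1 hk2 (by omega) (Nat.div_mul_le_self _ _) χ s x hx1 hm
          a d hd hap ?_)
      have hkr : (2 : ℝ) ≤ k := by exact_mod_cast hk2
      rw [mul_div_assoc', div_le_iff₀ (by linarith)]
      have g1 : (1 : ℝ) ≤ x 0 := by exact_mod_cast hx1 0 (by omega)
      have g2 : (x (k - 1) : ℝ) ≤ N := by exact_mod_cast hx2 (k - 1) (by omega)
      have g3 : 8 * ε * ((x (k - 1) : ℝ) - x 0) ≤ 8 * ε * N := by gcongr; linarith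
      have g4 : (n : ℝ) * 2 ≤ n * k := by gcongr
      linarith

lemma goodCol_not (ε : ℝ) (k r N N' : ℕ) (χ : ℤ → Fin r) (h : GoodCol ε k r N χ) (hN : N' ≤ N) :
    ¬ HasMonoAPeps ε k r N' := by
  intro hm
  obtain ⟨x, h1, h2, h3⟩ := hm χ
  refine h x (fun i hi => ?_) h2 h3
  have := Finset.mem_Icc.mp (h1 i hi)
  rw [Finset.mem_Icc]; constructor <;> omega

theorem approximate_van_der_waerden_bounds (r : ℕ) (hr : 1 ≤ r) :
    ∃ ε₀ : ℝ, 0 < ε₀ ∧ ∃ c : ℝ, 0 < c ∧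
      ∀ ε : ℝ, 0 < ε → ε ≤ ε₀ →
        ∀ k : ℕ,
          (k : ℝ) ≥ 2 ^ r * (Nat.factorial r : ℝ) * ε⁻¹ * (Real.log (1 / (5 * ε))) ^ r →
          c * (k : ℝ) ^ r /
              (ε ^ (r - 1) * (Real.log (1 / ε)) ^ (Nat.choose (r + 1) 2 - 1)) ≤
            (Weps ε k r : ℝ) ∧
          (Weps ε k r : ℝ) ≤ 2 * (k : ℝ) ^ r / ε ^ (r - 1) := by
  obtain ⟨r, rfl⟩ : ∃ r', r = r' + 1 := ⟨r - 1, by omega⟩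
  obtain ⟨c, K, hc0, hc1, hK1, hlow⟩ := lower r
  refine ⟨Real.exp (-K) / 5, by positivity, c, hc0, ?_⟩
  intro ε h0 hε k hk
  simp only [Nat.add_sub_cancel]
  have hexp : Real.exp (-K) ≤ 1 := Real.exp_le_one_iff.mpr (by linarith)
  have h4 : ε ≤ 1 / 4 := by linarith
  have hlog : K ≤ Real.log (1 / (5 * ε)) := by
    rw [Real.le_log_iff_exp_le (by positivity), le_div_iff₀ (by positivity)]
    calc Real.exp K * (5 * ε) ≤ Real.exp K * Real.exp (-K) := by gcongr; linarith
      _ = 1 := by rw [← Real.exp_add]; simp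
  have hlog2 : 1 ≤ Real.log (1 / ε) := by
    have : Real.log (1 / (5 * ε)) ≤ Real.log (1 / ε) := by
      apply Real.log_le_log (by positivity)
      apply one_div_le_one_div_of_le h0; linarith
    linarith
  have hkK : K / ε ≤ k := by
    refine le_trans ?_ hk
    have a1 : (1 : ℝ) ≤ 2 ^ (r + 1) := one_le_pow₀ (by norm_num)
    have a2 : (1 : ℝ) ≤ (Nat.factorial (r + 1) : ℝ) := by exact_mod_cast Nat.factorial_pos _
    have a3 : K ≤ (Real.log (1 / (5 * ε))) ^ (r + 1) :=
      hlog.trans (le_self_pow₀ (by linarith) (by omega))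
    have a4 : (1 : ℝ) ≤ 2 ^ (r + 1) * (Nat.factorial (r + 1) : ℝ) := by nlinarith
    calc K / ε = 1 * ε⁻¹ * K := by rw [div_eq_mul_inv]; ring
      _ ≤ _ := by gcongr
  have hkpos : (1 : ℝ) ≤ k := by
    refine le_trans ?_ hkK
    rw [le_div_iff₀ h0]; linarith
  have hk1 : 1 ≤ k := by exact_mod_cast hkpos
  set X : ℝ := (k : ℝ) ^ (r + 1) / ε ^ r with hX
  have hX1 : 1 ≤ X := by
    rw [hX, le_div_iff₀ (by positivity)]
    have a1 : ε ^ r ≤ 1 := pow_le_one₀ h0.le (by linarith)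
    have a2 : 1 ≤ (k : ℝ) ^ (r + 1) := one_le_pow₀ hkpos
    linarith
  have hup : HasMonoAPeps ε k (r + 1) ⌈X⌉₊ := upper ε h0 (by linarith) k hk1 r _ (Nat.le_ceil X)
  have hmem : ⌈X⌉₊ ∈ {N : ℕ | 0 < N ∧ HasMonoAPeps ε k (r + 1) N} :=
    ⟨Nat.ceil_pos.mpr (by linarith), hup⟩
  constructor
  · have hW : HasMonoAPeps ε k (r + 1) (Weps ε k (r + 1)) := (Nat.sInf_mem ⟨_, hmem⟩).2
    have h5 : c * (k : ℝ) ^ (r + 1) / ε ^ r ≤ Weps ε k (r + 1) := by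
      by_contra hcon
      push Not at hcon
      obtain ⟨χ, hχ⟩ := hlow ε h0 h4 k hkK _ hcon.le
      exact goodCol_not ε k (r + 1) _ _ χ hχ le_rfl hW
    refine le_trans ?_ h5
    gcongr
    have : 1 ≤ (Real.log (1 / ε)) ^ (Nat.choose (r + 1 + 1) 2 - 1) := one_le_pow₀ hlog2
    have : 0 < ε ^ r := by positivity
    nlinarith
  · have h6 : Weps ε k (r + 1) ≤ ⌈X⌉₊ := Nat.sInf_le hmem
    have h7 : (Weps ε k (r + 1) : ℝ) ≤ ⌈X⌉₊ := by exact_mod_cast h6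
    have h8 : (⌈X⌉₊ : ℝ) < X + 1 := Nat.ceil_lt_add_one (by linarith)
    have h9 : 2 * (k : ℝ) ^ (r + 1) / ε ^ r = 2 * X := by rw [hX]; ring
    rw [h9]; linarith
end

section
/- Let r ≥ 1 and k ≥ 1 be integers, let 0 < ε < 1, and set t = ⌈k/ε⌉. Let B_r = { b_0 + t·b_1 + … + t^{r-1}·b_{r-1} : (b_0,…,b_{r-1}) ∈ {0,1,…,k−1}^r }. Then every coloring of B_r with r colors contains a monochromatic AP_k(ε). -/
def InBlk (t : ℤ) (k n : ℕ) (y : ℤ) : Prop :=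
  ∃ b : ℕ → ℕ, (∀ j, b j ≤ k - 1) ∧ y = ∑ j ∈ Finset.range n, t ^ j * (b j : ℤ)

lemma InBlk.succ {t : ℤ} {k n : ℕ} {y : ℤ} (h : InBlk t k n y) {i : ℕ} (hi : i ≤ k - 1) :
    InBlk t k (n + 1) (t ^ n * i + y) := by
  obtain ⟨b, hb, rfl⟩ := h
  refine ⟨Function.update b n i, ?_, ?_⟩
  · intro j
    by_cases hj : j = n
    · subst hj; simpa using hi
    · simpa [hj] using hb j
  · rw [Finset.sum_range_succ, add_comm]
    congr 1
    · apply Finset.sum_congr rfl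
      intro j hj
      have : j ≠ n := (Finset.mem_range.1 hj).ne
      simp [this]
    · simp

lemma InBlk.bound {t : ℤ} {k n : ℕ} {y : ℤ} (hk : 1 ≤ k) (ht : 1 ≤ t) (h : InBlk t k n y) :
    0 ≤ y ∧ (t - 1) * y ≤ ((k : ℤ) - 1) * (t ^ n - 1) := by
  obtain ⟨b, hb, rfl⟩ := h
  constructor
  · exact Finset.sum_nonneg fun j _ => by positivity
  · rw [← mul_geom_sum t n, Finset.mul_sum, Finset.mul_sum, Finset.mul_sum]
    apply Finset.sum_le_sum
    intro j _
    have h1 : (b j : ℤ) ≤ (k : ℤ) - 1 := by have := hb j; omega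
    have h2 : 0 ≤ (t - 1) * t ^ j := mul_nonneg (by linarith) (by positivity)
    nlinarith [mul_le_mul_of_nonneg_left h1 h2]

lemma blk_main {α : Type*} [DecidableEq α] (k : ℕ) (hk : 1 ≤ k)
    (ε : ℝ) (hε : 0 < ε) (hε1 : ε < 1) (t : ℤ) (ht1 : 1 < t) (ht : (k : ℝ) ≤ ε * t)
    (c : ℤ → α) (n : ℕ) : ∀ (S : Finset α) (m : ℤ), S.card = n →
      (∀ y, InBlk t k n y → c (m + y) ∈ S) →
      ∃ x : ℕ → ℤ, (∀ i < k, ∃ y, InBlk t k n y ∧ x i = m + y) ∧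
        (∀ i < k, ∀ j < k, c (x i) = c (x j)) ∧ IsAPeps ε k x := by
  induction n with
  | zero =>
    intro S m hS h
    have := h 0 ⟨fun _ => 0, by simp, by simp⟩
    rw [Finset.card_eq_zero] at hS
    simp [hS] at this
  | succ n ih =>
    intro S m hS h
    obtain ⟨q, hq⟩ : S.Nonempty := by rw [← Finset.card_pos]; omega
    by_cases H : ∀ i : ℕ, ∃ y, i < k → InBlk t k n y ∧ c (m + (t ^ n * i + y)) = q
    · choose y hy using H
      refine ⟨fun i => m + (t ^ n * i + y i), ?_, ?_, ?_⟩
      · intro i hi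
        exact ⟨_, (hy i hi).1.succ (by omega), rfl⟩
      · intro i hi j hj
        exact (hy i hi).2.trans (hy j hj).2.symm
      · have htp : (1 : ℝ) < t := by exact_mod_cast ht1
        have hd : (0 : ℝ) < (t : ℝ) ^ n := by positivity
        refine ⟨m, (t : ℝ) ^ n, hd, ?_⟩
        intro i hi
        obtain ⟨h0, h1⟩ := (hy i hi).1.bound hk ht1.le
        have h0' : (0 : ℝ) ≤ y i := by exact_mod_cast h0
        have h1' : ((t : ℝ) - 1) * y i ≤ ((k : ℝ) - 1) * ((t : ℝ) ^ n - 1) := by exact_mod_cast h1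
        have hk' : (1 : ℝ) ≤ k := by exact_mod_cast hk
        have e : (((m + (t ^ n * i + y i) : ℤ)) : ℝ) - (m + (i : ℝ) * (t : ℝ) ^ n) = y i := by
          push_cast; ring
        rw [e, abs_of_nonneg h0']
        have h3 : (k : ℝ) - 1 < ε * (t - 1) := by linarith
        have h4 := mul_lt_mul_of_pos_right h3 hd
        have h5 : ((t : ℝ) - 1) * y i < (t - 1) * (ε * (t : ℝ) ^ n) := by nlinarith
        exact lt_of_mul_lt_mul_left h5 (by linarith)
    · push Not at H
      obtain ⟨i, hi⟩ := H
      have hik : i < k := (hi 0).1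
      obtain ⟨x, hx, hx2⟩ := ih (S.erase q) (m + t ^ n * i)
        (by rw [Finset.card_erase_of_mem hq]; omega)
        (by
          intro y hy
          rw [Finset.mem_erase, add_assoc]
          exact ⟨(hi y).2 hy, h _ (hy.succ (by omega))⟩)
      refine ⟨x, ?_, hx2⟩
      intro j hj
      obtain ⟨y, hy, e⟩ := hx j hj
      exact ⟨_, hy.succ (i := i) (by omega), by rw [e, add_assoc]⟩

theorem blowup_coloring_has_mono_APeps (r k : ℕ) (hr : 1 ≤ r) (hk : 1 ≤ k)
    (ε : ℝ) (hε : 0 < ε) (hε1 : ε < 1) (t : ℤ) (ht : t = ⌈(k : ℝ) / ε⌉)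
    (c : ℤ → Fin r) :
    ∃ x : ℕ → ℤ,
      (∀ i < k, ∃ b : Fin r → ℕ, (∀ j, b j ≤ k - 1) ∧
        x i = ∑ j : Fin r, t ^ (j : ℕ) * (b j : ℤ)) ∧
      (∀ i < k, ∀ j < k, c (x i) = c (x j)) ∧
      IsAPeps ε k x := by
  have hk' : (1 : ℝ) ≤ k := by exact_mod_cast hk
  have h1 : (k : ℝ) / ε ≤ t := by rw [ht]; exact Int.le_ceil _
  have h2 : (k : ℝ) ≤ ε * t := by rw [div_le_iff₀ hε] at h1; linarith
  have h3 : 1 < t := by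
    have : (1 : ℝ) < k / ε := by rw [lt_div_iff₀ hε]; linarith
    exact_mod_cast this.trans_le h1
  obtain ⟨x, hx, hx2⟩ := blk_main k hk ε hε hε1 t h3 h2 c r Finset.univ 0 (by simp) (by simp)
  refine ⟨x, ?_, hx2⟩
  intro i hi
  obtain ⟨y, ⟨b, hb, rfl⟩, e⟩ := hx i hi
  refine ⟨fun j => b j, fun j => hb j, ?_⟩
  rw [e, zero_add, Finset.sum_range]
end

section
/- Let r ≥ 2 be an integer, let D, δ > 0 be reals with δ ≤ 1/(2r(r+1)), and let χ : ℝ → {−1,+1} be an (r−1,1;D)-alternate labeling of ℝ. Suppose a, d ∈ ℝ and ℓ is a positive integer such that d ∉ ⋃_{i∈ℤ} ⋃_{q=1}^{r} ((i/q − δ)rD, (i/q + δ)rD), and suppose there exist real numbers y_0,…,y_{ℓ−1} with |y_i − (a + i·d)| < δ·r·D and χ(y_i) = +1 for all 0 ≤ i ≤ ℓ−1 (i.e., the union of balls ⋃_{i=0}^{ℓ−1} B(a+id, δrD) has a monochromatic transversal of label +1). Then ℓ ≤ 3r/δ. -/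
/-- An `(r−1,1;D)`-alternate labeling of `ℝ`: a `{−1,+1}`-valued function `χ` for which
there exists `m ∈ ℤ` such that `χ x = +1` iff `x ∈ ⋃_{i∈ℤ} (irD+mD, (i+(r−1)/r)rD+mD]`
and `χ x = −1` iff `x ∈ ⋃_{i∈ℤ} ((i+(r−1)/r)rD+mD, (i+1)rD+mD]`. -/
def IsAltLabeling (r : ℕ) (D : ℝ) (χ : ℝ → ℤ) : Prop :=
  ∃ m : ℤ,
    (∀ x : ℝ, χ x = 1 ∨ χ x = -1) ∧
    (∀ x : ℝ, χ x = 1 ↔ ∃ i : ℤ,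
      (i : ℝ) * ((r : ℝ) * D) + (m : ℝ) * D < x ∧
      x ≤ ((i : ℝ) + ((r : ℝ) - 1) / (r : ℝ)) * ((r : ℝ) * D) + (m : ℝ) * D) ∧
    (∀ x : ℝ, χ x = -1 ↔ ∃ i : ℤ,
      ((i : ℝ) + ((r : ℝ) - 1) / (r : ℝ)) * ((r : ℝ) * D) + (m : ℝ) * D < x ∧
      x ≤ ((i : ℝ) + 1) * ((r : ℝ) * D) + (m : ℝ) * D)

theorem mono_transversal_length_bound (r : ℕ) (hr : 2 ≤ r) (D δ : ℝ)
    (hD : 0 < D) (hδ : 0 < δ) (hδ' : δ ≤ 1 / (2 * (r : ℝ) * ((r : ℝ) + 1)))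
    (χ : ℝ → ℤ) (hχ : IsAltLabeling r D χ)
    (a d : ℝ) (ℓ : ℕ) (hℓ : 0 < ℓ)
    (hd : ∀ i : ℤ, ∀ q : ℕ, 1 ≤ q → q ≤ r →
      d ∉ Set.Ioo (((i : ℝ) / (q : ℝ) - δ) * ((r : ℝ) * D))
                  (((i : ℝ) / (q : ℝ) + δ) * ((r : ℝ) * D)))
    (y : ℕ → ℝ)
    (hy : ∀ i < ℓ, |y i - (a + (i : ℝ) * d)| < δ * (r : ℝ) * D ∧ χ (y i) = 1) :
    (ℓ : ℝ) ≤ 3 * (r : ℝ) / δ := by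
  obtain ⟨m, -, hp, -⟩ := hχ
  have hr2 : (2:ℝ) ≤ r := by exact_mod_cast hr
  have hr0 : (0:ℝ) < r := by linarith
  have hR : 0 < (r:ℝ) * D := by positivity
  have hgap : 1 / ((r:ℝ) + 1) ≤ 1 / r - 2 * δ := by
    have e : 1 / (r:ℝ) - 2 * (1 / (2 * (r : ℝ) * ((r : ℝ) + 1))) = 1 / ((r:ℝ) + 1) := by
      field_simp
      ring
    linarith
  have hrp : 0 < 1 / ((r:ℝ) + 1) := by positivity
  have hδr : δ * r ≤ 1 := by
    have h1 : 1 / (r:ℝ) * r = 1 := by field_simp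
    have h2 : (1 / (r:ℝ) - 2 * δ) * r ≥ 0 := mul_nonneg (by linarith) hr0.le
    nlinarith [mul_pos hδ hr0]
  obtain ⟨α, hα⟩ : ∃ α, d = α * (r * D) := ⟨d / (r * D), by field_simp⟩
  obtain ⟨A, hA⟩ : ∃ A, a = A * (r * D) + m * D := ⟨(a - m * D) / (r * D), by field_simp; ring⟩
  have key : ∀ i < ℓ, ∃ n : ℤ, (n:ℝ) - δ < A + i * α ∧ A + i * α < n + 1 - 1 / r + δ := by
    intro i hi
    obtain ⟨h1, h2⟩ := hy i hi
    obtain ⟨n, h3, h4⟩ := (hp _).1 h2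
    rw [abs_lt] at h1
    have e : ((r:ℝ) - 1) / r = 1 - 1 / r := by field_simp
    rw [e] at h4
    refine ⟨n, lt_of_mul_lt_mul_right (a := (r:ℝ) * D) ?_ hR.le,
      lt_of_mul_lt_mul_right (a := (r:ℝ) * D) ?_ hR.le⟩
    · subst hα hA; nlinarith
    · subst hα hA; nlinarith
  obtain ⟨q, hq0, hqr, hq⟩ := Real.exists_nat_abs_mul_sub_round_le α (n := r) (by omega)
  generalize round ((q:ℝ) * α) = p at hq
  have hqR : (0:ℝ) < q := by exact_mod_cast hq0
  have hlow : q * δ ≤ |(q:ℝ) * α - p| := by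
    by_contra! hlt
    rw [abs_lt] at hlt
    apply hd p q hq0 hqr
    have e : (p:ℝ) = (p / q : ℝ) * q := by field_simp
    generalize (p / q : ℝ) = t at e
    rw [e] at hlt
    have h1 : t - δ < α := by nlinarith
    have h2 : α < t + δ := by nlinarith
    rw [hα]
    exact ⟨mul_lt_mul_of_pos_right h1 hR, mul_lt_mul_of_pos_right h2 hR⟩
  set β := (q:ℝ) * α - p with hβ
  have hq' := abs_le.1 hq
  have main : ∃ n : ℤ, ∀ k : ℕ, k * q < ℓ →
      (n:ℝ) - δ < A + k * β ∧ A + k * β < n + 1 - 1 / r + δ := by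
    obtain ⟨n, hn⟩ := key 0 hℓ
    refine ⟨n, fun k => ?_⟩
    induction k with
    | zero => intro _; simpa using hn
    | succ k ih =>
      intro hk
      obtain ⟨i1, i2⟩ := ih (by nlinarith)
      obtain ⟨n', j1, j2⟩ := key _ hk
      have e : A + (((k + 1) * q : ℕ) : ℝ) * α = A + ((k + 1 : ℕ):ℝ) * β + (((k + 1 : ℕ) * p : ℤ) : ℝ) := by
        rw [hβ]; push_cast; ring
      rw [e] at j1 j2
      generalize ((k + 1 : ℕ) * p : ℤ) = P at j1 j2
      have e2 : ((k + 1 : ℕ):ℝ) * β = k * β + β := by push_cast; ring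
      rw [e2] at j1 j2 ⊢
      have l1 : n' - P < n + 1 := by
        have : ((n' - P : ℤ):ℝ) < ((n + 1 : ℤ):ℝ) := by push_cast; linarith
        exact_mod_cast this
      have l2 : n < n' - P + 1 := by
        have : ((n : ℤ):ℝ) < ((n' - P + 1 : ℤ):ℝ) := by push_cast; linarith
        exact_mod_cast this
      have l3 : n' = n + P := by omega
      rw [l3] at j1 j2
      push_cast at j1 j2
      constructor <;> linarith
  obtain ⟨n, hn⟩ := main
  have hdm := Nat.div_add_mod (ℓ - 1) q
  have hml := Nat.mod_lt (ℓ - 1) hq0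
  generalize (ℓ - 1) / q = k at hdm
  have hk : k * q < ℓ := by rw [mul_comm]; omega
  have hk2 : ℓ ≤ k * q + q := by rw [mul_comm k]; omega
  have a0 := hn 0 (by simpa using hℓ)
  have ak := hn k hk
  simp only [Nat.cast_zero, zero_mul, add_zero] at a0
  have hb : |(k:ℝ) * β| < 1 := by rw [abs_lt]; constructor <;> linarith
  rw [abs_mul, Nat.abs_cast] at hb
  have hb2 : (k:ℝ) * (q * δ) < 1 :=
    lt_of_le_of_lt (mul_le_mul_of_nonneg_left hlow (Nat.cast_nonneg k)) hb
  have hk2' : (ℓ:ℝ) ≤ k * q + q := by exact_mod_cast hk2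
  have hqr' : (q:ℝ) ≤ r := by exact_mod_cast hqr
  rw [le_div_iff₀ hδ]
  have h5 : (ℓ:ℝ) * δ ≤ (k * q + r) * δ := mul_le_mul_of_nonneg_right (by linarith) hδ.le
  nlinarith
end

section
/- Let D, r, t, ℓ be positive integers with r ≥ 2 and ℓ ≥ t(r+1)+2, and let 0 < ε < 1/(2r) be a real number. If the integers {1,…,rtD} are labeled by an (r−1,1;D)-alternate labeling and X ⊆ {1,…,rtD} is an AP_ℓ(ε) all of whose elements have label +1, then there exists 0 ≤ i ≤ rt−1 such that the D-block [iD+1,(i+1)D] satisfies |X ∩ [iD+1,(i+1)D]| ≥ ℓ/(r−1). -/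
theorem mono_APeps_concentrates_in_block (D r t ℓ : ℕ)
    (hD : 0 < D) (hr : 2 ≤ r) (ht : 0 < t) (hℓ0 : 0 < ℓ)
    (hℓ : t * (r + 1) + 2 ≤ ℓ)
    (ε : ℝ) (hε : 0 < ε) (hε' : ε < 1 / (2 * (r : ℝ)))
    (χ : ℝ → ℤ) (hχ : IsAltLabeling r (D : ℝ) χ)
    (X : Finset ℤ) (hXsub : X ⊆ Finset.Icc (1 : ℤ) ((r * t * D : ℕ) : ℤ))
    (x : ℕ → ℤ) (hXx : X = (Finset.range ℓ).image x) (hap : IsAPeps ε ℓ x)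
    (hlabel : ∀ n ∈ X, χ (n : ℝ) = 1) :
    ∃ i : ℕ, i ≤ r * t - 1 ∧
      (ℓ : ℝ) / ((r : ℝ) - 1) ≤
        ((X ∩ Finset.Icc ((i : ℤ) * (D : ℤ) + 1) (((i : ℤ) + 1) * (D : ℤ))).card : ℝ) := by
  obtain ⟨a, d, hd, hx⟩ := hap
  obtain ⟨m, -, hpos, -⟩ := hχ
  have hrR : (2 : ℝ) ≤ r := by exact_mod_cast hr
  have hDR : (0 : ℝ) < D := by exact_mod_cast hD
  have hre : ε * (2 * r) < 1 := by
    rwa [lt_div_iff₀ (by positivity)] at hε'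
  have he4 : 4 * ε < 1 := by nlinarith
  have hmem : ∀ i < ℓ, x i ∈ X := by
    intro i hi
    rw [hXx]
    exact Finset.mem_image_of_mem _ (Finset.mem_range.2 hi)
  have hseg : ∀ i, ∃ j : ℤ, i < ℓ →
      (j * r + m) * D < x i ∧ x i ≤ (j * r + m + r - 1) * D := by
    intro i
    by_cases hi : i < ℓ
    · obtain ⟨j, h1, h2⟩ := (hpos _).1 (hlabel _ (hmem i hi))
      refine ⟨j, fun _ => ⟨?_, ?_⟩⟩
      · have : (((j * r + m) * D : ℤ) : ℝ) < x i := by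
          push_cast
          linarith
        exact_mod_cast this
      · have : (x i : ℝ) ≤ (((j * r + m + r - 1) * D : ℤ) : ℝ) := by
          push_cast
          have e : ((j : ℝ) + ((r : ℝ) - 1) / (r : ℝ)) * ((r : ℝ) * D) + (m : ℝ) * D
            = (j * r + m + r - 1) * D := by
            field_simp
            ring
          linarith
        exact_mod_cast this
    · exact ⟨0, fun h => absurd h hi⟩
  choose j hj using hseg
  have hmono : ∀ p q, p < q → q < ℓ → x p < x q := by
    intro p q hpq hq
    have h1 := abs_lt.1 (hx p (by omega))
    have h2 := abs_lt.1 (hx q hq)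
    have h3 : (p : ℝ) + 1 ≤ q := by exact_mod_cast hpq
    have : (x p : ℝ) < x q := by nlinarith [h1.1, h1.2, h2.1, h2.2]
    exact_mod_cast this
  have hstep : ∀ i, i + 1 < ℓ → j (i + 1) = j i := by
    intro i hi
    have hlt := hmono i (i+1) (by omega) hi
    obtain ⟨h1, h2⟩ := hj i (by omega)
    obtain ⟨h3, h4⟩ := hj (i+1) hi
    have hDZ : (0 : ℤ) < D := by exact_mod_cast hD
    have hrZ : (0 : ℤ) < r := by omega
    rcases lt_trichotomy (j (i+1)) (j i) with h | h | h
    · exfalso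
      have h5 : (j (i+1) + 1) * (r : ℤ) ≤ j i * r :=
        mul_le_mul_of_nonneg_right (by omega) hrZ.le
      have h6 : (j (i+1) * r + m + r - 1) * (D : ℤ) ≤ (j i * r + m) * D :=
        mul_le_mul_of_nonneg_right (by linarith) hDZ.le
      linarith
    · exact h
    · exfalso
      have h5 : (j i + 1) * (r : ℤ) ≤ j (i+1) * r :=
        mul_le_mul_of_nonneg_right (by omega) hrZ.le
      have h6 : (j i * r + m + r) * (D : ℤ) ≤ (j (i+1) * r + m) * D :=
        mul_le_mul_of_nonneg_right (by linarith) hDZ.le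
      have h7 : (D : ℤ) < x (i+1) - x i := by linarith
      have h7' : (D : ℝ) < x (i+1) - x i := by exact_mod_cast h7
      have g1 := abs_lt.1 (hx i (by omega))
      have g2 := abs_lt.1 (hx (i+1) hi)
      push_cast at g2
      have hDd : (D : ℝ) < (1 + 2 * ε) * d := by linarith [g1.1, g2.2]
      have hDd2 : (r : ℝ) * D < (r + 1) * d := by
        have := mul_lt_mul_of_pos_left hDd (show (0:ℝ) < r by linarith)
        nlinarith
      have m0 := Finset.mem_Icc.1 (hXsub (hmem 0 hℓ0))
      have ml := Finset.mem_Icc.1 (hXsub (hmem (ℓ-1) (by omega)))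
      have hdiff : x (ℓ-1) - x 0 ≤ ((r * t * D : ℕ) : ℤ) := by linarith [m0.1, ml.2]
      have hdiff' : (x (ℓ-1) : ℝ) - x 0 ≤ r * t * D := by exact_mod_cast hdiff
      have k0 := abs_lt.1 (hx 0 hℓ0)
      have kl := abs_lt.1 (hx (ℓ-1) (by omega))
      rw [Nat.cast_sub (by omega)] at kl
      push_cast at k0 kl
      have hℓR : (t : ℝ) * (r + 1) + 2 ≤ ℓ := by exact_mod_cast hℓ
      have htR : (0 : ℝ) < t := by exact_mod_cast ht
      have e1 : ((ℓ : ℝ) - 1 - 2 * ε) * d < t * (r * D) := by linarith [k0.2, kl.1]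
      have e2 : (t : ℝ) * (r * D) < t * ((r + 1) * d) := mul_lt_mul_of_pos_left hDd2 htR
      have e3 : ((t : ℝ) * (r + 1)) * d ≤ ((ℓ : ℝ) - 1 - 2 * ε) * d :=
        mul_le_mul_of_nonneg_right (by linarith) hd.le
      linarith
  have hall : ∀ i, i < ℓ → j i = j 0 := by
    intro i
    induction i with
    | zero => intro _; rfl
    | succ k ih => intro h; rw [hstep k h, ih (by omega)]
  have hcard : X.card = ℓ := by
    rw [hXx, Finset.card_image_of_injOn, Finset.card_range]
    intro p hp q hq hpq
    simp only [Finset.coe_range, Set.mem_Iio] at hp hq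
    rcases lt_trichotomy p q with h | h | h
    · exact absurd hpq (hmono p q h hq).ne
    · exact h
    · exact absurd hpq (hmono q p h hp).ne'
  have hDZ : (0 : ℤ) < D := by exact_mod_cast hD
  set B : ℤ := j 0 * r + m with hB
  set T : Finset ℤ := Finset.Ico B (B + ((r - 1 : ℕ) : ℤ)) with hT
  have hTcard : T.card = r - 1 := by
    rw [hT, Int.card_Ico]
    omega
  have hmaps : ∀ n ∈ X, (n - 1) / (D : ℤ) ∈ T := by
    intro n hn
    rw [hXx] at hn
    obtain ⟨i, hi, rfl⟩ := Finset.mem_image.1 hn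
    have hi := Finset.mem_range.1 hi
    obtain ⟨h1, h2⟩ := hj i hi
    rw [hall i hi, ← hB] at h1 h2
    rw [hT, Finset.mem_Ico]
    constructor
    · rw [Int.le_ediv_iff_mul_le hDZ]; omega
    · rw [Int.ediv_lt_iff_lt_mul hDZ]
      have : B + ((r - 1 : ℕ) : ℤ) = B + r - 1 := by omega
      rw [this]; omega
  have hr1 : (0 : ℝ) < (r : ℝ) - 1 := by linarith
  obtain ⟨b, hb, hfib⟩ := Finset.exists_le_card_fiber_of_nsmul_le_card_of_maps_to
    (b := (ℓ : ℝ) / ((r : ℝ) - 1)) hmaps (by rw [← Finset.card_pos]; omega) (by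
      rw [hTcard, hcard, nsmul_eq_mul, Nat.cast_sub (by omega), Nat.cast_one]
      exact (mul_div_cancel₀ _ hr1.ne').le)
  have hℓR : (0 : ℝ) < ℓ := by exact_mod_cast hℓ0
  have hne : 0 < (X.filter (fun n => (n - 1) / (D : ℤ) = b)).card := by
    have : (0 : ℝ) < (X.filter (fun n => (n - 1) / (D : ℤ) = b)).card :=
      lt_of_lt_of_le (by positivity) hfib
    exact_mod_cast this
  obtain ⟨n, hn⟩ := Finset.card_pos.1 hne
  obtain ⟨hnX, hnb⟩ := Finset.mem_filter.1 hn
  have hnI := Finset.mem_Icc.1 (hXsub hnX)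
  have hb0 : 0 ≤ b := by
    rw [← hnb]; exact Int.ediv_nonneg (by omega) hDZ.le
  have hbt : b < ((r * t : ℕ) : ℤ) := by
    rw [← hnb, Int.ediv_lt_iff_lt_mul hDZ]
    have := hnI.2
    push_cast at this ⊢
    linarith
  refine ⟨b.toNat, by omega, hfib.trans ?_⟩
  rw [Int.toNat_of_nonneg hb0]
  refine Nat.cast_le.2 (Finset.card_le_card ?_)
  intro y hy
  obtain ⟨hyX, hyb⟩ := Finset.mem_filter.1 hy
  refine Finset.mem_inter.2 ⟨hyX, Finset.mem_Icc.2 ?_⟩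
  have q1 := Int.ediv_mul_le (y - 1) hDZ.ne'
  have q2 := Int.lt_ediv_add_one_mul_self (y - 1) hDZ
  rw [hyb] at q1 q2
  constructor <;> omega
end

section
/- Let 0 < ε < 1/4 and let k be a sufficiently large integer. Then a (1,1;k−1)-alternate labeling of the set {1, …, 2⌊(k−2)/3⌋(k−1)} contains no monochromatic AP_k(ε); consequently W_ε(k,2) > 2⌊(k−2)/3⌋(k−1). -/
theorem vdw_aux (ε : ℝ) (hε : 0 < ε) (k : ℕ) :
    ∃ N : ℕ, 0 < N ∧ HasMonoAPeps ε k 2 N := by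
  obtain ⟨ι, _inst, hι⟩ := Combinatorics.Line.exists_mono_in_high_dimension (Fin k) (Fin 2)
  refine ⟨Fintype.card ι * k + 1, by omega, ?_⟩
  intro c
  obtain ⟨l, col, hl⟩ := hι (fun v => c (1 + ∑ i, ((v i : ℕ) : ℤ)))
  classical
  set n : ℕ := (Finset.univ.filter (fun i => l.idxFun i = none)).card with hn
  set a : ℤ := ∑ i, (match l.idxFun i with | none => 0 | some y => ((y : ℕ) : ℤ)) with ha
  have hnpos : 0 < n := by
    obtain ⟨i, hi⟩ := l.proper
    exact Finset.card_pos.mpr ⟨i, by simp [hi]⟩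
  have key : ∀ j : Fin k, ∑ i, ((l j i : ℕ) : ℤ) = a + (j : ℕ) * (n : ℤ) := by
    intro j
    have h2 : ((j : ℕ) : ℤ) * (n : ℤ) = ∑ i, if l.idxFun i = none then ((j : ℕ) : ℤ) else 0 := by
      rw [← Finset.sum_filter, Finset.sum_const, hn]
      simp [mul_comm]
    rw [h2, ha, ← Finset.sum_add_distrib]
    refine Finset.sum_congr rfl fun i _ => ?_
    rw [Combinatorics.Line.coe_apply]
    cases h : l.idxFun i <;> simp
  refine ⟨fun j => 1 + (a + (j : ℕ) * (n : ℤ)), ?_, ?_, ?_⟩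
  · intro i hi
    have h := key ⟨i, hi⟩
    simp only at h
    beta_reduce
    rw [← h, Finset.mem_Icc]
    constructor
    · have : 0 ≤ ∑ i', ((l ⟨i, hi⟩ i' : ℕ) : ℤ) := Finset.sum_nonneg fun _ _ => by positivity
      linarith
    · have : ∑ i', ((l ⟨i, hi⟩ i' : ℕ) : ℤ) ≤ ∑ _i' : ι, (k : ℤ) :=
        Finset.sum_le_sum fun i' _ => by exact_mod_cast (l ⟨i, hi⟩ i').2.le
      rw [Finset.sum_const, Finset.card_univ, nsmul_eq_mul] at this
      push_cast
      linarith
  · have h : ∀ i < k, c (1 + (a + (i : ℕ) * (n : ℤ))) = col := by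
      intro i hi
      have h1 := hl ⟨i, hi⟩
      simp only [key] at h1
      exact h1
    intro i hi j hj
    simp only [h i hi, h j hj]
  · have hn' : (0 : ℝ) < n := by exact_mod_cast hnpos
    refine ⟨1 + a, n, hn', fun i _ => ?_⟩
    push_cast
    have : (1 + ((a : ℝ) + i * n)) - (1 + a + i * n) = 0 := by ring
    rw [this, abs_zero]
    positivity

theorem block_aux (D c : ℝ) (hD : 0 < D) (k : ℕ) (hk : 2 ≤ k) (hkD : D = (k : ℝ) - 1)
    (x : ℕ → ℤ)
    (hx : ∀ i < k, ∃ j : ℤ, 2 * (j : ℝ) * D + c < x i ∧ (x i : ℝ) ≤ (2 * (j : ℝ) + 1) * D + c)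
    (hlt : ∀ i, i + 1 < k → x i < x (i + 1))
    (hD' : ∀ i, i + 1 < k → (x (i + 1) : ℝ) < x i + D) : False := by
  obtain ⟨j, hj1, hj2⟩ := hx 0 (by omega)
  have main : ∀ i < k, (x 0 + (i : ℤ) ≤ x i) ∧ (x i : ℝ) ≤ (2 * (j : ℝ) + 1) * D + c := by
    intro i
    induction i with
    | zero => intro _; exact ⟨by simp, hj2⟩
    | succ i ih =>
      intro hi
      obtain ⟨h1, h2⟩ := ih (by omega)
      have h3 := hlt i hi
      have h4 := hD' i hi
      refine ⟨by push_cast; omega, ?_⟩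
      obtain ⟨j', h5, h6⟩ := hx (i + 1) hi
      have hle : j' ≤ j := by
        by_contra hcon
        have : (j : ℝ) + 1 ≤ j' := by exact_mod_cast (by omega : j + 1 ≤ j')
        nlinarith
      have : (j' : ℝ) ≤ j := by exact_mod_cast hle
      nlinarith
  obtain ⟨h1, h2⟩ := main (k - 1) (by omega)
  have h3 : (x 0 : ℝ) + ((k : ℝ) - 1) ≤ x (k - 1) := by
    have : x 0 + ((k : ℤ) - 1) ≤ x (k - 1) := by omega
    exact_mod_cast this
  nlinarith

theorem no_mono_aux (ε : ℝ) (hε : 0 < ε) (hε' : ε < 1 / 4) (k : ℕ) (hk : 2 ≤ k)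
    (χ : ℝ → ℤ) (hχ : IsAltLabeling 2 ((k : ℝ) - 1) χ) :
    ¬ ∃ x : ℕ → ℤ,
          (∀ i < k, x i ∈ Finset.Icc (1 : ℤ) ((2 * ((k - 2) / 3) * (k - 1) : ℕ) : ℤ)) ∧
          (∀ i < k, ∀ j < k, χ ((x i : ℝ)) = χ ((x j : ℝ))) ∧
          IsAPeps ε k x := by
  rintro ⟨x, hr, hm, a, d, hd, hap⟩
  obtain ⟨m, h0, h1, h2⟩ := hχ
  obtain ⟨D, hDdef⟩ : ∃ D : ℝ, D = (k : ℝ) - 1 := ⟨_, rfl⟩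
  rw [← hDdef] at h1 h2
  have hD1 : 1 ≤ D := by
    have : (2 : ℝ) ≤ k := by exact_mod_cast hk
    linarith
  have hspan : d * (D - 2 * ε) < 2 * D * (D - 1) / 3 - 1 := by
    have e0 := (Finset.mem_Icc.mp (hr 0 (by omega))).1
    have e1 := (Finset.mem_Icc.mp (hr (k - 1) (by omega))).2
    have a0 := (abs_lt.mp (hap 0 (by omega))).2
    have a1 := (abs_lt.mp (hap (k - 1) (by omega))).1
    have hc : ((k - 1 : ℕ) : ℝ) = D := by rw [hDdef, Nat.cast_sub (by omega)]; simp
    have hq : (((k - 2) / 3 : ℕ) : ℝ) ≤ (D - 1) / 3 := by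
      have : 3 * ((k - 2) / 3) + 2 ≤ k := by omega
      have : (3 : ℝ) * (((k - 2) / 3 : ℕ) : ℝ) + 2 ≤ k := by exact_mod_cast this
      linarith
    have e0' : (1 : ℝ) ≤ x 0 := by exact_mod_cast e0
    have e1' : (x (k - 1) : ℝ) ≤ 2 * (((k - 2) / 3 : ℕ) : ℝ) * ((k - 1 : ℕ) : ℝ) := by
      have e2 : ((x (k - 1) : ℤ) : ℝ) ≤ (((2 * ((k - 2) / 3) * (k - 1) : ℕ) : ℤ) : ℝ) :=
        Int.cast_le.mpr e1
      rw [Int.cast_natCast, Nat.cast_mul, Nat.cast_mul] at e2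
      exact e2
    rw [hc] at e1' a1
    simp at a0
    nlinarith
  have hd2 : d < 2 * D / 3 := by
    by_contra hcon
    push Not at hcon
    have := mul_le_mul_of_nonneg_right hcon (by linarith : 0 ≤ D - 2 * ε)
    nlinarith
  have hlt : ∀ i, i + 1 < k → x i < x (i + 1) := by
    intro i hi
    have b0 := (abs_lt.mp (hap i (by omega))).2
    have b1 := (abs_lt.mp (hap (i + 1) hi)).1
    push_cast at b1
    have : (x i : ℝ) < x (i + 1) := by nlinarith
    exact_mod_cast this
  have hD' : ∀ i, i + 1 < k → (x (i + 1) : ℝ) < x i + D := by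
    intro i hi
    have b0 := (abs_lt.mp (hap i (by omega))).1
    have b1 := (abs_lt.mp (hap (i + 1) hi)).2
    push_cast at b1
    nlinarith
  rcases h0 (x 0) with hc | hc
  · refine block_aux D (m * D) (by linarith) k hk hDdef x ?_ hlt hD'
    intro i hi
    obtain ⟨j, p, q⟩ := (h1 (x i)).mp ((hm i hi 0 (by omega)).trans hc)
    refine ⟨j, ?_, ?_⟩ <;> push_cast at p q <;> linarith
  · refine block_aux D (m * D + D) (by linarith) k hk hDdef x ?_ hlt hD'
    intro i hi
    obtain ⟨j, p, q⟩ := (h2 (x i)).mp ((hm i hi 0 (by omega)).trans hc)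
    refine ⟨j, ?_, ?_⟩ <;> push_cast at p q <;> linarith

theorem exists_alt_aux (D : ℝ) (hD : 0 < D) : ∃ χ : ℝ → ℤ, IsAltLabeling 2 D χ := by
  classical
  have A : ∀ x : ℝ, Odd ⌈x / D⌉ ↔ ∃ i : ℤ, 2 * (i : ℝ) * D < x ∧ x ≤ (2 * (i : ℝ) + 1) * D := by
    intro x
    refine exists_congr fun i => ?_
    rw [Int.ceil_eq_iff, lt_div_iff₀ hD, div_le_iff₀ hD]
    push_cast
    simp
  have B : ∀ x : ℝ, ¬ Odd ⌈x / D⌉ ↔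
      ∃ i : ℤ, (2 * (i : ℝ) + 1) * D < x ∧ x ≤ (2 * (i : ℝ) + 2) * D := by
    intro x
    have : ¬ Odd ⌈x / D⌉ ↔ ∃ i : ℤ, ⌈x / D⌉ = 2 * i + 2 := by
      rw [Int.not_odd_iff_even]
      constructor
      · rintro ⟨r, hr⟩; exact ⟨r - 1, by omega⟩
      · rintro ⟨r, hr⟩; exact ⟨r + 1, by omega⟩
    rw [this]
    refine exists_congr fun i => ?_
    rw [Int.ceil_eq_iff, lt_div_iff₀ hD, div_le_iff₀ hD]
    push_cast
    have : (2 * (i : ℝ) + 2 - 1) = 2 * i + 1 := by ring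
    rw [this]
  refine ⟨fun x => if Odd ⌈x / D⌉ then 1 else -1, 0, ?_, ?_, ?_⟩
  · intro x
    by_cases h : Odd ⌈x / D⌉ <;> simp only [h, if_true, if_false] <;> simp
  · intro x
    have : (if Odd ⌈x / D⌉ then (1 : ℤ) else -1) = 1 ↔ Odd ⌈x / D⌉ := by
      by_cases h : Odd ⌈x / D⌉ <;> simp only [h, if_true, if_false] <;> simp
    simp only [this]
    rw [A]
    refine exists_congr fun i => ?_
    push_cast
    constructor <;> rintro ⟨p, q⟩ <;> constructor <;> linarith
  · intro x
    have : (if Odd ⌈x / D⌉ then (1 : ℤ) else -1) = -1 ↔ ¬ Odd ⌈x / D⌉ := by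
      by_cases h : Odd ⌈x / D⌉ <;> simp only [h, if_true, if_false] <;> simp
    simp only [this]
    rw [B]
    refine exists_congr fun i => ?_
    push_cast
    constructor <;> rintro ⟨p, q⟩ <;> constructor <;> linarith

theorem two_color_lower_bound (ε : ℝ) (hε : 0 < ε) (hε' : ε < 1 / 4) :
    ∃ k₀ : ℕ, ∀ k : ℕ, k₀ ≤ k →
      (∀ χ : ℝ → ℤ, IsAltLabeling 2 ((k : ℝ) - 1) χ →
        ¬ ∃ x : ℕ → ℤ,
          (∀ i < k, x i ∈ Finset.Icc (1 : ℤ) ((2 * ((k - 2) / 3) * (k - 1) : ℕ) : ℤ)) ∧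
          (∀ i < k, ∀ j < k, χ ((x i : ℝ)) = χ ((x j : ℝ))) ∧
          IsAPeps ε k x) ∧
      2 * ((k - 2) / 3) * (k - 1) < Weps ε k 2 := by
  refine ⟨2, fun k hk => ⟨fun χ hχ => no_mono_aux ε hε hε' k hk χ hχ, ?_⟩⟩
  by_contra hcon
  push Not at hcon
  have hmem : Weps ε k 2 ∈ {N : ℕ | 0 < N ∧ HasMonoAPeps ε k 2 N} := Nat.sInf_mem (vdw_aux ε hε k)
  have hD : (0 : ℝ) < (k : ℝ) - 1 := by
    have : (2 : ℝ) ≤ k := by exact_mod_cast hk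
    linarith
  obtain ⟨χ, hχ⟩ := exists_alt_aux _ hD
  refine no_mono_aux ε hε hε' k hk χ hχ ?_
  have h0 : ∀ y : ℝ, χ y = 1 ∨ χ y = -1 := by
    obtain ⟨m, h, _⟩ := hχ
    exact h
  obtain ⟨x, hx1, hx2, hx3⟩ := hmem.2 (fun z => if χ (z : ℝ) = 1 then 0 else 1)
  refine ⟨x, ?_, ?_, hx3⟩
  · intro i hi
    have h := Finset.mem_Icc.mp (hx1 i hi)
    have hc : ((Weps ε k 2 : ℕ) : ℤ) ≤ ((2 * ((k - 2) / 3) * (k - 1) : ℕ) : ℤ) :=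
      Int.ofNat_le.mpr hcon
    exact Finset.mem_Icc.mpr ⟨h.1, h.2.trans hc⟩
  · intro i hi j hj
    have h := hx2 i hi j hj
    rcases h0 (x i) with p | p <;> rcases h0 (x j) with q | q <;> simp [p, q] at h ⊢
end

section
/- Let s ≥ 2 be an even integer, let M₀ > 0 be a real number, let L = lcm(s/2+1, s/2+2, …, s), and let d be a real number with M₀ < d ≤ (L/2)·M₀. Then there exists an index 1 ≤ j₀ ≤ s/2 such that |d − m·(s−j₀+1)·M₀| ≥ M₀/2 for every integer m. -/
theorem far_from_multiples (s : ℕ) (hs : 2 ≤ s) (hse : Even s)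
    (M₀ : ℝ) (hM : 0 < M₀) (d : ℝ) (hd1 : M₀ < d)
    (hd2 : d ≤ (((Finset.Icc (s / 2 + 1) s).lcm id : ℕ) : ℝ) / 2 * M₀) :
    ∃ j₀ : ℕ, 1 ≤ j₀ ∧ j₀ ≤ s / 2 ∧
      ∀ m : ℤ, M₀ / 2 ≤ |d - (m : ℝ) * ((s : ℝ) - (j₀ : ℝ) + 1) * M₀| := by
  by_contra! hcon
  have key : ∀ k ∈ Finset.Icc (s / 2 + 1) s, ∃ m : ℤ,
      |d - ((m * (k : ℤ) : ℤ) : ℝ) * M₀| < M₀ / 2 := by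
    intro k hk
    rw [Finset.mem_Icc] at hk
    obtain ⟨t, ht⟩ := hse
    obtain ⟨m, hm⟩ := hcon (s - k + 1) (by omega) (by omega)
    refine ⟨m, ?_⟩
    have h : (s : ℝ) - ((s - k + 1 : ℕ) : ℝ) + 1 = k := by
      push_cast [Nat.cast_sub hk.2]
      ring
    rw [h] at hm
    push_cast
    exact hm
  obtain ⟨m₁, hm₁⟩ := key s (Finset.mem_Icc.2 ⟨by omega, le_refl _⟩)
  generalize m₁ * (s : ℤ) = n at hm₁
  rw [abs_lt] at hm₁
  have hn0 : 0 < n := by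
    have : (0 : ℝ) < n := by
      by_contra! h
      nlinarith
    exact_mod_cast this
  have hdvd : ∀ k ∈ Finset.Icc (s / 2 + 1) s, k ∣ n.toNat := by
    intro k hk
    obtain ⟨m, hm⟩ := key k hk
    rw [abs_lt] at hm
    have h1 : m * (k : ℤ) < n + 1 := by
      have : ((m * (k : ℤ) : ℤ) : ℝ) < n + 1 := by
        by_contra! h
        nlinarith
      exact_mod_cast this
    have h2 : n < m * (k : ℤ) + 1 := by
      have : (n : ℝ) < ((m * (k : ℤ) : ℤ) : ℝ) + 1 := by
        by_contra! h
        nlinarith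
      exact_mod_cast this
    have h3 : n = m * (k : ℤ) := by omega
    have : (k : ℤ) ∣ (n.toNat : ℤ) := by
      rw [Int.toNat_of_nonneg hn0.le, h3]
      exact Dvd.intro_left m rfl
    exact_mod_cast this
  have hL : (Finset.Icc (s / 2 + 1) s).lcm id ∣ n.toNat := Finset.lcm_dvd hdvd
  have hle := Nat.le_of_dvd (by omega) hL
  generalize (Finset.Icc (s / 2 + 1) s).lcm id = L at *
  have hle' : (L : ℤ) ≤ n := by omega
  have hleR : (L : ℝ) ≤ n := by exact_mod_cast hle'
  have hL1 : (1 : ℝ) < L / 2 := by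
    by_contra! h
    nlinarith
  nlinarith [mul_le_mul_of_nonneg_right hleR hM.le, mul_lt_mul_of_pos_right hL1 hM]
end

section
/- For every even integer s ≥ 2, lcm(s/2+1, s/2+2, …, s) = lcm(1, 2, …, s). -/
theorem lcm_upper_half (s : ℕ) (hs : 2 ≤ s) (hse : Even s) :
    (Finset.Icc (s / 2 + 1) s).lcm id = (Finset.Icc 1 s).lcm id := by
  apply Nat.dvd_antisymm
  · apply Finset.lcm_dvd
    intro b hb
    apply Finset.dvd_lcm
    simp only [Finset.mem_Icc] at hb ⊢
    omega
  · apply Finset.lcm_dvd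
    intro a ha
    simp only [Finset.mem_Icc] at ha
    have h1 := Nat.div_add_mod s a
    have h2 := Nat.mod_lt s (show 0 < a by omega)
    have h3 : a ≤ a * (s / a) :=
      Nat.le_mul_of_pos_right a (Nat.div_pos ha.2 (by omega))
    have h4 : a * (s / a) ∈ Finset.Icc (s / 2 + 1) s := by
      simp only [Finset.mem_Icc]
      omega
    exact (Dvd.intro _ rfl).trans (Finset.dvd_lcm (f := id) h4)
end

section
/- Let k ≥ 3 be an integer, let 0 < ε ≤ 1/125 be real such that q = 1/(25ε) is an integer, and let h ≥ 1 be an integer. Let S' ⊆ {0,1,…,q−1} be a set containing no arithmetic progression of length k, and let S'' ⊆ {⌈2q/5⌉,…,⌊3q/5⌋} be a set containing no arithmetic progression of length k. Define A = { s_0 + s_1·q + … + s_{h−1}·q^{h−1} : s_{h−1} ∈ S' and s_i ∈ S'' for 0 ≤ i ≤ h−2 }. Then A contains no AP_k(ε). -/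
/-- `S` contains no arithmetic progression of length `k` (with nonzero common difference). -/
def APkFree (k : ℕ) (S : Set ℤ) : Prop :=
  ¬ ∃ a d : ℤ, d ≠ 0 ∧ ∀ i < k, a + (i : ℤ) * d ∈ S

lemma aux_lin (k : ℕ) (t : ℕ → ℤ) (H : ∀ i, i + 2 < k → t i - 2 * t (i+1) + t (i+2) = 0) :
    ∀ i, (i < k → t i = t 0 + i * (t 1 - t 0)) ∧
      (i + 1 < k → t (i+1) = t 0 + (i+1 : ℕ) * (t 1 - t 0)) := by
  intro i
  induction i with
  | zero => simp
  | succ n ih =>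
    refine ⟨ih.2, fun hn => ?_⟩
    have h1 := ih.1 (by omega)
    have h2 := ih.2 (by omega)
    have h3 := H n hn
    push_cast at *
    have : t (n+1+1) = 2 * t (n+1) - t n := by
      have : n + 1 + 1 = n + 2 := rfl
      rw [this]; linarith
    rw [this, h2, h1]; ring

lemma aux_r (q : ℝ) (hq : 5 ≤ q) (s : ℕ → ℤ) (n : ℕ)
    (hs : ∀ i < n, 2 * q / 5 ≤ (s i : ℝ) ∧ (s i : ℝ) ≤ 3 * q / 5) :
    |∑ i ∈ Finset.range n, (s i : ℝ) * q ^ i - ∑ i ∈ Finset.range n, q / 2 * q ^ i|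
      ≤ (q ^ n - 1) / 8 := by
  induction n with
  | zero => simp
  | succ n ih =>
    have h1 := ih (fun i hi => hs i (by omega))
    obtain ⟨h2, h3⟩ := hs n (by omega)
    have hp : 0 < q ^ n := by positivity
    rw [Finset.sum_range_succ, Finset.sum_range_succ, pow_succ]
    rw [abs_le] at *
    constructor <;> nlinarith [mul_le_mul_of_nonneg_right h2 hp.le,
      mul_le_mul_of_nonneg_right h3 hp.le, mul_le_mul_of_nonneg_right hq hp.le]

lemma aux_main (k : ℕ) (hk : 3 ≤ k) (ε : ℝ) (hε : 0 < ε) (hε' : ε ≤ 1 / 125)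
    (q : ℕ) (hq : ε * q = 1 / 25) (hq5 : (5 : ℝ) ≤ q) (S'' : Set ℤ)
    (hS''sub : ∀ s ∈ S'', 2 * (q : ℝ) / 5 ≤ (s : ℝ) ∧ (s : ℝ) ≤ 3 * (q : ℝ) / 5)
    (hS''free : APkFree k S'') (n : ℕ) :
    ∀ (S' : Set ℤ), (∀ s ∈ S', (0 : ℝ) ≤ s ∧ (s : ℝ) ≤ q - 1) → APkFree k S' →
    ∀ (x : ℕ → ℤ) (s : ℕ → ℕ → ℤ), (∀ i < k, s i n ∈ S' ∧ (∀ j < n, s i j ∈ S'') ∧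
        x i = ∑ j ∈ Finset.range (n+1), s i j * (q : ℤ) ^ j) → ¬ IsAPeps ε k x := by
  induction n with
  | zero => ?_
  | succ n ih => ?_
  all_goals
    intro S' hS' hfree x s hx ⟨a, d, hd, hap⟩
  case' zero => let m := 0
  case' succ => let m := n + 1
  all_goals
    have hx' : ∀ i < k, s i m ∈ S' ∧ (∀ j < m, s i j ∈ S'') ∧
        x i = ∑ j ∈ Finset.range (m+1), s i j * (q : ℤ) ^ j := hx
    have hconst : ∀ i < k, s i m = s 0 m := by
      clear_value m
      set Q : ℝ := (q : ℝ) ^ m with hQ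
      have hQ1 : 0 < Q := by positivity
      set c : ℝ := ∑ j ∈ Finset.range m, (q : ℝ) / 2 * (q : ℝ) ^ j
      have key : ∀ i < k, |(x i : ℝ) - s i m * Q - c| ≤ (Q - 1) / 8 := by
        intro i hi
        obtain ⟨-, h2, h3⟩ := hx' i hi
        have := aux_r q hq5 (s i) m (fun j hj => hS''sub _ (h2 j hj))
        rw [h3, Finset.sum_range_succ]
        push_cast
        rw [add_sub_cancel_right]
        exact this
      have hdq : ε * d ≤ Q / 40 := by
        have a0 := hap 0 (by omega)
        have a2 := hap 2 (by omega)
        have k0 := key 0 (by omega)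
        have k2 := key 2 (by omega)
        have t0 := hS' _ (hx' 0 (by omega)).1
        have t2 := hS' _ (hx' 2 (by omega)).1
        rw [abs_lt] at a0 a2
        rw [abs_le] at k0 k2
        push_cast at a0 a2
        have e1 := mul_nonneg t0.1 hQ1.le
        have e2 := mul_le_mul_of_nonneg_right t2.2 hQ1.le
        have e3 : ε * d ≤ 1 / 125 * d := mul_le_mul_of_nonneg_right hε' hd.le
        have e4 : (2 - 2 / 125) * d ≤ q * Q := by nlinarith
        have e5 := mul_le_mul_of_nonneg_left e4 hε.le
        have e6 : ε * (q * Q) = Q / 25 := by rw [← mul_assoc, hq]; ring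
        nlinarith
      have hlin := aux_lin k (fun i => s i m) (by
        intro i hi
        have a0 := hap i (by omega)
        have a1 := hap (i+1) (by omega)
        have a2 := hap (i+2) (by omega)
        have k0 := key i (by omega)
        have k1 := key (i+1) (by omega)
        have k2 := key (i+2) (by omega)
        rw [abs_lt] at a0 a1 a2
        rw [abs_le] at k0 k1 k2
        push_cast at a0 a1 a2
        set z : ℤ := s i m - 2 * s (i+1) m + s (i+2) m with hz
        have hzr : (z : ℝ) = s i m - 2 * s (i+1) m + s (i+2) m := by
          rw [hz]; push_cast; ring
        have u1 : (z : ℝ) * Q < 1 * Q := by rw [hzr]; linarith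
        have u2 : (-1) * Q < (z : ℝ) * Q := by rw [hzr]; linarith
        have v1 := lt_of_mul_lt_mul_right u1 hQ1.le
        have v2 := lt_of_mul_lt_mul_right u2 hQ1.le
        have w1 : z < 1 := by exact_mod_cast v1
        have w2 : -1 < z := by exact_mod_cast v2
        show z = 0
        omega)
      have hD : s 1 m - s 0 m = 0 := by
        by_contra hne
        refine hfree ⟨s 0 m, s 1 m - s 0 m, hne, fun i hi => ?_⟩
        have := (hlin i).1 hi
        rw [← this]
        exact (hx' i hi).1
      intro i hi
      have := (hlin i).1 hi
      simp only [hD] at this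
      simpa using this
  case zero =>
    have a0 := hap 0 (by omega)
    have a1 := hap 1 (by omega)
    have : x 1 = x 0 := by
      rw [(hx 1 (by omega)).2.2, (hx 0 (by omega)).2.2]
      simpa using hconst 1 (by omega)
    rw [this] at a1
    rw [abs_lt] at a0 a1
    push_cast at a0 a1
    nlinarith
  case succ =>
    refine ih S'' (fun t ht => ?_) hS''free (fun i => x i - s 0 m * (q:ℤ)^m) s
      (fun i hi => ⟨(hx i hi).2.1 n (by omega), fun j hj => (hx i hi).2.1 j (by omega), ?_⟩)
      ⟨a - s 0 m * (q:ℝ)^m, d, hd, fun i hi => ?_⟩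
    · obtain ⟨h1, h2⟩ := hS''sub t ht
      constructor <;> linarith
    · show _ = _
      rw [(hx i hi).2.2, Finset.sum_range_succ, ← hconst i hi]
      simp [m]
    · have := hap i hi
      push_cast
      convert this using 2
      ring

theorem digit_construction_APeps_free (k : ℕ) (hk : 3 ≤ k)
    (ε : ℝ) (hε : 0 < ε) (hε' : ε ≤ 1 / 125)
    (q : ℕ) (hq : (q : ℝ) = 1 / (25 * ε))
    (h : ℕ) (hh : 1 ≤ h)
    (S' S'' : Set ℤ)
    (hS'sub : S' ⊆ Set.Icc (0 : ℤ) ((q : ℤ) - 1))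
    (hS'free : APkFree k S')
    (hS''sub : S'' ⊆ Set.Icc ⌈(2 * (q : ℝ)) / 5⌉ ⌊(3 * (q : ℝ)) / 5⌋)
    (hS''free : APkFree k S'') :
    ¬ ∃ x : ℕ → ℤ,
      (∀ i < k, x i ∈ {z : ℤ | ∃ s : ℕ → ℤ, s (h - 1) ∈ S' ∧ (∀ i < h - 1, s i ∈ S'') ∧
        z = ∑ i ∈ Finset.range h, s i * (q : ℤ) ^ i}) ∧
      IsAPeps ε k x := by
  rintro ⟨x, hx, hap⟩
  obtain ⟨n, rfl⟩ : ∃ n, h = n + 1 := ⟨h - 1, by omega⟩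
  simp only [Set.mem_ofPred_eq, Nat.add_sub_cancel] at hx
  have hq1 : ε * q = 1 / 25 := by rw [hq]; field_simp
  have hq5 : (5 : ℝ) ≤ q := by
    rw [hq, le_div_iff₀ (by positivity)]; linarith
  choose! s hs using hx
  refine aux_main k hk ε hε hε' q hq1 hq5 S'' (fun t ht => ?_) hS''free n S' (fun t ht => ?_)
    hS'free x s hs hap
  · obtain ⟨h1, h2⟩ := hS''sub ht
    exact ⟨Int.ceil_le.1 h1, Int.le_floor.1 h2⟩
  · obtain ⟨h1, h2⟩ := hS'sub ht
    exact ⟨by exact_mod_cast h1, by exact_mod_cast h2⟩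
end

section
/- Let m ≥ 1, k ≥ 3 and r ≥ 1 be integers, let ε > 0 be real, and let t be an integer with t ≥ k·√m/ε. Let Δ = {0,1,…,k−1}^m ⊆ ℤ^m and A_r = { v_0 + t·v_1 + … + t^{r−1}·v_{r−1} : v_0,…,v_{r−1} ∈ Δ }. If 0 < α < 1 is a real number with α > ((k^m − 1)/k^m)^r, then every X ⊆ A_r with |X| ≥ α·|A_r| contains a C_ε(m,k). -/
/-- The family `x v ∈ ℤ^m`, indexed by `v ∈ {0,…,k−1}^m`, is an ε-approximate cube
`C_ε(m,k)`. -/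
def IsCubeEps (ε : ℝ) (m k : ℕ) (x : (Fin m → ℕ) → (Fin m → ℤ)) : Prop :=
  ∃ (a : Fin m → ℝ) (d : ℝ), 0 < d ∧ ∀ v : Fin m → ℕ, (∀ j, v j < k) →
    Real.sqrt (∑ j : Fin m, ((x v j : ℝ) - (a j + d * (v j : ℝ))) ^ 2) < ε * d

/-- The finite set `A ⊆ ℤ^m` contains an ε-approximate cube `C_ε(m,k)`. -/
def FinsetContainsCube (ε : ℝ) (m k : ℕ) (A : Finset (Fin m → ℤ)) : Prop :=
  ∃ x : (Fin m → ℕ) → (Fin m → ℤ),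
    (∀ v : Fin m → ℕ, (∀ j, v j < k) → x v ∈ A) ∧ IsCubeEps ε m k x

lemma cube_of (m k : ℕ) (hm : 1 ≤ m) (hk : 3 ≤ k) (ε : ℝ) (hε : 0 < ε) (t : ℕ)
    (ht : (k : ℝ) * Real.sqrt m / ε ≤ (t : ℝ)) (X : Finset (Fin m → ℤ))
    (x : (Fin m → ℕ) → (Fin m → ℤ)) (a : Fin m → ℝ) (d : ℝ) (hd : 0 < d)
    (hx : ∀ v : Fin m → ℕ, (∀ j, v j < k) → x v ∈ X)
    (hb : ∀ v : Fin m → ℕ, (∀ j, v j < k) → ∀ j,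
      |(x v j : ℝ) - (a j + d * (v j : ℝ))| * t < k * d) :
    FinsetContainsCube ε m k X := by
  refine ⟨x, hx, a, d, hd, fun v hv => ?_⟩
  have hm' : (0:ℝ) < Real.sqrt m := Real.sqrt_pos.2 (by exact_mod_cast hm)
  have hk' : (0:ℝ) < k := by exact_mod_cast (by omega : 0 < k)
  have ht0 : (0:ℝ) < t := lt_of_lt_of_le (by positivity) ht
  rw [div_le_iff₀ hε] at ht
  have h1 : ∀ j, ((x v j : ℝ) - (a j + d * (v j : ℝ))) ^ 2 < (k * d / t) ^ 2 := by
    intro j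
    apply sq_lt_sq'
    · have := (lt_div_iff₀ ht0).2 (hb v hv j)
      exact (abs_lt.1 this).1
    · have := (lt_div_iff₀ ht0).2 (hb v hv j)
      exact (abs_lt.1 this).2
  have h2 : ∑ j : Fin m, ((x v j : ℝ) - (a j + d * (v j : ℝ))) ^ 2 < m * (k * d / t) ^ 2 := by
    have : ∑ j : Fin m, ((x v j : ℝ) - (a j + d * (v j : ℝ))) ^ 2
        < ∑ j : Fin m, (k * d / t) ^ 2 := by
      apply Finset.sum_lt_sum_of_nonempty
      · exact ⟨⟨0, by omega⟩, Finset.mem_univ _⟩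
      · intro j _; exact h1 j
    simpa using this
  have h3 : Real.sqrt (∑ j : Fin m, ((x v j : ℝ) - (a j + d * (v j : ℝ))) ^ 2)
      < Real.sqrt m * (k * d / t) := by
    have h4 : Real.sqrt (m * (k * d / t) ^ 2) = Real.sqrt m * (k * d / t) := by
      rw [Real.sqrt_mul (by positivity), Real.sqrt_sq (by positivity)]
    rw [← h4]
    exact Real.sqrt_lt_sqrt (Finset.sum_nonneg fun _ _ => sq_nonneg _) h2
  refine lt_of_lt_of_le h3 ?_
  rw [← mul_div_assoc, div_le_iff₀ ht0]
  nlinarith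

lemma abs_step {α ι : Type*} [DecidableEq α] [DecidableEq ι] (S X : Finset α) (f : α → ι)
    (U : Finset ι) (hf : ∀ x ∈ S, f x ∈ U) (b K : ℝ) (hb : 0 ≤ b) (hK : 0 < K)
    (h : ∀ u ∈ U, (((X ∩ S).filter (fun x => f x = u)).card : ℝ)
      ≤ b * ((S.filter (fun x => f x = u)).card : ℝ))
    (u0 : ι) (hu0 : u0 ∈ U) (he : ∀ x ∈ X, x ∈ S → f x ≠ u0)
    (hc : (S.card : ℝ) ≤ K * ((S.filter (fun x => f x = u0)).card : ℝ)) :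
    ((X ∩ S).card : ℝ) ≤ b * ((K - 1) / K) * S.card := by
  have e1 := Finset.card_eq_sum_card_fiberwise (s := S) (t := U) (f := f) (by exact_mod_cast hf)
  have e2 := Finset.card_eq_sum_card_fiberwise (s := X ∩ S) (t := U) (f := f)
    (by intro x hx; exact hf x (Finset.mem_inter.1 hx).2)
  rw [← Finset.add_sum_erase _ _ hu0] at e1 e2
  have e3 : ((X ∩ S).filter (fun x => f x = u0)).card = 0 := by
    rw [Finset.card_eq_zero, Finset.filter_eq_empty_iff]
    intro x hx
    exact he x (Finset.mem_inter.1 hx).1 (Finset.mem_inter.1 hx).2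
  rw [e3, zero_add] at e2
  have e4 : ((X ∩ S).card : ℝ) ≤ b * ∑ u ∈ U.erase u0, ((S.filter (fun x => f x = u)).card : ℝ) := by
    rw [e2, Finset.mul_sum]
    push_cast
    exact Finset.sum_le_sum fun u hu => h u (Finset.mem_of_mem_erase hu)
  have e5 : ∑ u ∈ U.erase u0, ((S.filter (fun x => f x = u)).card : ℝ)
      = S.card - ((S.filter (fun x => f x = u0)).card : ℝ) := by
    rw [e1]; push_cast; ring
  rw [e5] at e4
  refine e4.trans ?_
  rw [mul_assoc]
  apply mul_le_mul_of_nonneg_left _ hb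
  have : (S.card : ℝ) / K ≤ ((S.filter (fun x => f x = u0)).card : ℝ) := by
    rw [div_le_iff₀ hK]; linarith
  have e6 : (K - 1) / K * S.card = S.card - S.card / K := by field_simp
  rw [e6]; linarith

/-- large base: nodes of the tree -/
def blkS (m k t : ℕ) : ℕ → (Fin m → ℤ) → Finset (Fin m → ℤ)
  | 0, b => {b}
  | (j+1), b => (Finset.univ : Finset (Fin m → Fin k)).biUnion
      (fun v => blkS m k t j (fun i => b i + (t : ℤ) ^ j * ((v i : ℕ) : ℤ)))

lemma blkS_bound (m k t : ℕ) (hk : 3 ≤ k) (htk : k ≤ t) (j : ℕ) : ∀ (b x : Fin m → ℤ),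
    x ∈ blkS m k t j b → ∀ i, 0 ≤ x i - b i ∧
      ((t:ℤ) - 1) * (x i - b i) ≤ ((k:ℤ) - 1) * ((t:ℤ) ^ j - 1) := by
  induction j with
  | zero =>
    intro b x hx i
    simp only [blkS, Finset.mem_singleton] at hx
    subst hx; simp
  | succ j ih =>
    intro b x hx i
    simp only [blkS, Finset.mem_biUnion, Finset.mem_univ, true_and] at hx
    obtain ⟨v, hv⟩ := hx
    obtain ⟨h1, h2⟩ := ih _ _ hv i
    have h3 : (0:ℤ) ≤ (t:ℤ) ^ j := by positivity
    have h4 : (((v i : ℕ) : ℤ)) ≤ k - 1 := by have := (v i).2; omega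
    have h5 : (0:ℤ) ≤ ((v i : ℕ) : ℤ) := by positivity
    have h6 : (0:ℤ) ≤ (t:ℤ) - 1 := by omega
    constructor
    · nlinarith
    · have := mul_le_mul_of_nonneg_left h4 (mul_nonneg h6 h3)
      rw [pow_succ]
      nlinarith

lemma blkS_card (m k : ℕ) (hm : 1 ≤ m) (hk : 3 ≤ k) (ε : ℝ) (hε : 0 < ε) (t : ℕ)
    (ht : (k : ℝ) * Real.sqrt m / ε ≤ (t : ℝ)) (htk : k ≤ t) (X : Finset (Fin m → ℤ))
    (hX : ¬ FinsetContainsCube ε m k X) (j : ℕ) : ∀ b : Fin m → ℤ,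
    (X ∩ blkS m k t j b).card ≤ (k ^ m - 1) ^ j := by
  classical
  induction j with
  | zero =>
    intro b
    simp only [blkS, pow_zero]
    exact (Finset.card_le_card Finset.inter_subset_right).trans (by simp)
  | succ j ih =>
    intro b
    have key : ∃ v0 : Fin m → Fin k,
        X ∩ blkS m k t j (fun i => b i + (t : ℤ) ^ j * ((v0 i : ℕ) : ℤ)) = ∅ := by
      by_contra hcon
      push Not at hcon
      choose y hy using hcon
      apply hX
      refine cube_of m k hm hk ε hε t ht X
        (fun v => if h : ∀ i, v i < k then y (fun i => ⟨v i, h i⟩) else 0)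
        (fun i => b i) ((t:ℝ) ^ j) (by have : 0 < t := by omega
                                       positivity) ?_ ?_
      · intro v hv
        simp only [hv, implies_true, dite_true]
        exact (Finset.mem_inter.1 (hy _)).1
      · intro v hv i
        simp only [hv, implies_true, dite_true]
        obtain ⟨h1, h2⟩ := blkS_bound m k t hk htk j _ _ (Finset.mem_inter.1 (hy (fun i => ⟨v i, hv i⟩))).2 i
        set z := y (fun i => ⟨v i, hv i⟩) i with hz
        simp only at h1 h2
        set w : ℤ := z - (b i + (t:ℤ) ^ j * ((v i : ℕ) : ℤ)) with hw
        have h3 : (z : ℝ) - ((b i : ℝ) + (t:ℝ) ^ j * (v i : ℝ)) = (w : ℝ) := by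
          rw [hw]; push_cast; ring
        rw [h3, abs_of_nonneg (by exact_mod_cast h1)]
        have h4 : w * t < k * (t:ℤ) ^ j := by
          have h5 : (k:ℤ) * (t:ℤ)^j ≤ t * (t:ℤ)^j := by gcongr
          have h6 : (0:ℤ) < (t:ℤ) - 1 := by omega
          have h7 : (0:ℤ) ≤ t := by positivity
          have h8 : (0:ℤ) < ((k:ℤ) - 1) * t := by
            apply mul_pos <;> omega
          have h9 := mul_le_mul_of_nonneg_right h2 h7
          by_contra hc
          push Not at hc
          have h10 := mul_le_mul_of_nonneg_left hc h6.le
          nlinarith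
        exact_mod_cast h4
    obtain ⟨v0, hv0⟩ := key
    have hsub : X ∩ blkS m k t (j+1) b ⊆ (Finset.univ.erase v0).biUnion
        (fun v => X ∩ blkS m k t j (fun i => b i + (t : ℤ) ^ j * ((v i : ℕ) : ℤ))) := by
      intro x hx
      obtain ⟨hx1, hx2⟩ := Finset.mem_inter.1 hx
      simp only [blkS, Finset.mem_biUnion, Finset.mem_univ, true_and] at hx2
      obtain ⟨v, hv⟩ := hx2
      have hv' := Finset.mem_inter.2 ⟨hx1, hv⟩
      refine Finset.mem_biUnion.2 ⟨v, ?_, hv'⟩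
      refine Finset.mem_erase.2 ⟨?_, Finset.mem_univ _⟩
      rintro rfl
      rw [hv0] at hv'
      simp at hv'
    refine (Finset.card_le_card hsub).trans ((Finset.card_biUnion_le_card_mul _ _ _
      (fun v _ => ih _)).trans ?_)
    rw [Finset.card_erase_of_mem (Finset.mem_univ _), Finset.card_univ]
    simp only [Fintype.card_fun, Fintype.card_fin]
    rw [pow_succ, mul_comm]

lemma mem_blkS (m k t : ℕ) (r : ℕ) : ∀ (b : Fin m → ℤ) (v : Fin r → Fin m → Fin k),
    (fun j : Fin m => b j + ∑ i : Fin r, (t : ℤ) ^ (i : ℕ) * ((v i j : ℕ) : ℤ)) ∈ blkS m k t r b := by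
  induction r with
  | zero => intro b v; simp [blkS]
  | succ r ih =>
    intro b v
    simp only [blkS, Finset.mem_biUnion, Finset.mem_univ, true_and]
    refine ⟨v (Fin.last r), ?_⟩
    convert ih (fun i => b i + (t : ℤ) ^ r * ((v (Fin.last r) i : ℕ) : ℤ)) (fun i => v i.castSucc) using 1
    funext j
    rw [Fin.sum_univ_castSucc]
    simp only [Fin.val_castSucc, Fin.val_last]
    ring

lemma digits_inj (k t : ℕ) (htk : k ≤ t) (r : ℕ) : ∀ v w : Fin r → Fin k,
    ∑ i : Fin r, (t : ℤ) ^ (i : ℕ) * ((v i : ℕ) : ℤ) = ∑ i : Fin r, (t : ℤ) ^ (i : ℕ) * ((w i : ℕ) : ℤ)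
    → v = w := by
  induction r with
  | zero => intro v w _; exact Subsingleton.elim _ _
  | succ r ih =>
    intro v w h
    have key : ∀ u : Fin (r+1) → Fin k, ∑ i : Fin (r+1), (t : ℤ) ^ (i : ℕ) * ((u i : ℕ) : ℤ)
        = ((u 0 : ℕ) : ℤ) + t * ∑ i : Fin r, (t : ℤ) ^ (i : ℕ) * ((u i.succ : ℕ) : ℤ) := by
      intro u
      rw [Fin.sum_univ_succ, Finset.mul_sum]
      simp [pow_succ, mul_comm, mul_assoc, mul_left_comm]
    rw [key, key] at h
    have a1 := (v 0).2
    have a2 := (w 0).2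
    have h0 : ((v 0 : ℕ) : ℤ) = ((w 0 : ℕ) : ℤ) := by
      have := congrArg (· % (t:ℤ)) h
      simp only [Int.add_mul_emod_self_left] at this
      rwa [Int.emod_eq_of_lt (by omega) (by omega), Int.emod_eq_of_lt (by omega) (by omega)] at this
    have h1 : ∑ i : Fin r, (t : ℤ) ^ (i : ℕ) * ((v i.succ : ℕ) : ℤ)
        = ∑ i : Fin r, (t : ℤ) ^ (i : ℕ) * ((w i.succ : ℕ) : ℤ) := by
      rw [h0] at h
      have ht : (t:ℤ) ≠ 0 := by omega
      exact mul_left_cancel₀ ht (add_left_cancel h)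
    have h2 := ih _ _ h1
    funext i
    refine Fin.cases ?_ (fun i => ?_) i
    · apply Fin.ext; exact_mod_cast h0
    · exact congrFun h2 i

/-- side length of the box -/
def bN (k t : ℕ) : ℕ → ℕ
  | 0 => 1
  | (r+1) => t * bN k t r + (k - t)

lemma bN_pos (k t : ℕ) (ht : 1 ≤ t) (r : ℕ) : 1 ≤ bN k t r := by
  induction r with
  | zero => simp [bN]
  | succ r ih => simp only [bN]; nlinarith

lemma bN_lower (k t : ℕ) (htk : t < k) (r : ℕ) : k * t ^ r ≤ bN k t (r+1) := by
  induction r with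
  | zero => simp [bN]; omega
  | succ r ih =>
    rw [bN, pow_succ]; nlinarith

lemma bN_upper (k t : ℕ) (ht : 2 ≤ t) (htk : t < k) (r : ℕ) :
    bN k t (r+1) + (k - t) ≤ 2 * k * t ^ r := by
  induction r with
  | zero => simp [bN]; omega
  | succ r ih =>
    rw [bN, pow_succ]; nlinarith

lemma repr_lt (k t : ℕ) (ht : 1 ≤ t) (htk : t < k) (r : ℕ) : ∀ v : Fin r → Fin k,
    ∑ i : Fin r, (t : ℤ) ^ (i : ℕ) * ((v i : ℕ) : ℤ) < bN k t r := by
  induction r with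
  | zero => intro v; simp [bN]
  | succ r ih =>
    intro u
    have key : ∑ i : Fin (r+1), (t : ℤ) ^ (i : ℕ) * ((u i : ℕ) : ℤ)
        = ((u 0 : ℕ) : ℤ) + t * ∑ i : Fin r, (t : ℤ) ^ (i : ℕ) * ((u i.succ : ℕ) : ℤ) := by
      rw [Fin.sum_univ_succ, Finset.mul_sum]
      simp [pow_succ, mul_comm, mul_assoc, mul_left_comm]
    rw [key, bN]
    have := ih (fun i => u i.succ)
    have a1 := (u 0).2
    push_cast [Nat.cast_sub htk.le]
    have h1 : (t:ℤ) * (∑ i : Fin r, (t : ℤ) ^ (i : ℕ) * ((u i.succ : ℕ) : ℤ) + 1) ≤ t * bN k t r := by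
      gcongr; omega
    have : ((u 0 : ℕ) : ℤ) < k := by omega
    linarith

lemma repr_exists (k t : ℕ) (ht : 1 ≤ t) (htk : t < k) (r : ℕ) : ∀ x : ℤ, 0 ≤ x → x < bN k t r →
    ∃ v : Fin r → Fin k, ∑ i : Fin r, (t : ℤ) ^ (i : ℕ) * ((v i : ℕ) : ℤ) = x := by
  induction r with
  | zero =>
    intro x h0 h1
    simp only [bN, Nat.cast_one] at h1
    exact ⟨fun i => i.elim0, by simp; omega⟩
  | succ r ih =>
    intro x h0 h1
    have key : ∃ (c : ℕ) (y : ℤ), c < k ∧ 0 ≤ y ∧ y < bN k t r ∧ (c : ℤ) + t * y = x := by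
      rw [bN] at h1
      push_cast [Nat.cast_sub htk.le] at h1
      by_cases hy : x / t < bN k t r
      · refine ⟨(x % t).toNat, x / t, ?_, Int.ediv_nonneg h0 (by omega), hy, ?_⟩
        · have := Int.emod_lt_of_pos x (by omega : (0:ℤ) < t)
          omega
        · rw [Int.toNat_of_nonneg (Int.emod_nonneg _ (by omega))]
          exact Int.emod_add_mul_ediv x t
      · push Not at hy
        have h2 : (bN k t r : ℤ) * t ≤ x := (Int.le_ediv_iff_mul_le (by omega)).1 hy
        have h3 := bN_pos k t ht r
        refine ⟨(x - t * (bN k t r - 1)).toNat, bN k t r - 1, ?_, by omega, by omega, ?_⟩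
        · have : x - t * ((bN k t r : ℤ) - 1) < k := by linarith
          omega
        · rw [Int.toNat_of_nonneg (by nlinarith)]; ring
    obtain ⟨c, y, hc, hy0, hy1, hxy⟩ := key
    obtain ⟨v, hv⟩ := ih y hy0 hy1
    refine ⟨Fin.cons ⟨c, hc⟩ v, ?_⟩
    rw [Fin.sum_univ_succ, ← hxy, ← hv, Finset.mul_sum]
    simp [pow_succ, mul_comm, mul_assoc, mul_left_comm]

/-- one-dimensional cells -/
noncomputable def cellD (n : ℕ) (T : ℕ) (z : ℤ) : Finset ℤ :=
  (Finset.Ico (0:ℤ) n).filter (fun x => (T:ℤ) * x / n = z)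

lemma cellD_card (n T : ℕ) (hn : 0 < n) (hT : 0 < T) (z : ℤ) (hz0 : 0 ≤ z) (hz1 : z < T) :
    ∃ (l : ℤ) (c : ℕ), cellD n T z = Finset.Ico l (l + c) ∧ (cellD n T z).card = c ∧
      n < (c + 1) * T ∧ c * T < n + T := by
  have hT' : (0:ℤ) < T := by omega
  have hn' : (0:ℤ) < n := by omega
  set l : ℤ := -((-(n * z)) / T) with hl
  set u : ℤ := -((-(n * (z+1))) / T) with hu
  have ml : ∀ x : ℤ, l ≤ x ↔ n * z ≤ T * x := by
    intro x
    rw [hl, neg_le, Int.le_ediv_iff_mul_le hT']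
    constructor <;> intro h <;> linarith
  have mu : ∀ x : ℤ, u ≤ x ↔ n * (z + 1) ≤ T * x := by
    intro x
    rw [hu, neg_le, Int.le_ediv_iff_mul_le hT']
    constructor <;> intro h <;> linarith
  have l1 := (ml l).1 le_rfl
  have l2 : ¬ l ≤ l - 1 := by omega
  have u1 := (mu u).1 le_rfl
  have u2 : ¬ u ≤ u - 1 := by omega
  rw [ml] at l2
  rw [mu] at u2
  push Not at l2 u2
  have hlu : l ≤ u := by rw [ml]; linarith
  have hl0 : 0 ≤ l := by
    by_contra h
    push Not at h
    have : 0 ≤ (n:ℤ) * z := by positivity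
    nlinarith
  have hun : u ≤ n := by
    rw [mu]; nlinarith
  have hset : cellD n T z = Finset.Ico l (l + ((u - l).toNat : ℕ)) := by
    ext x
    rw [Int.toNat_of_nonneg (by omega)]
    simp only [cellD, Finset.mem_filter, Finset.mem_Ico]
    have e : (T:ℤ) * x / n = z ↔ l ≤ x ∧ x < u := by
      rw [ml, ← not_le (a := u), mu, not_le]
      constructor
      · rintro rfl
        have a1 := Int.mul_ediv_self_le (x := (T:ℤ) * x) (k := n) hn'.ne'
        have a2 := Int.lt_mul_ediv_self_add (x := (T:ℤ) * x) hn'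
        constructor <;> linarith
      · rintro ⟨a1, a2⟩
        apply le_antisymm
        · apply Int.lt_add_one_iff.1
          rw [Int.ediv_lt_iff_lt_mul hn']; linarith
        · rw [Int.le_ediv_iff_mul_le hn']; linarith
    rw [e]
    constructor
    · rintro ⟨_, h1, h2⟩; omega
    · rintro ⟨h1, h2⟩; omega
  refine ⟨l, (u - l).toNat, hset, ?_, ?_, ?_⟩
  · rw [hset, Int.card_Ico]; omega
  · zify
    rw [Int.toNat_of_nonneg (by omega)]
    linarith
  · zify
    rw [Int.toNat_of_nonneg (by omega)]
    linarith

noncomputable def cellB (m n T : ℕ) (u : Fin m → ℤ) : Finset (Fin m → ℤ) :=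
  Fintype.piFinset (fun j => cellD n T (u j))

lemma mem_cellB {m n T : ℕ} {u x : Fin m → ℤ} : x ∈ cellB m n T u ↔
    ∀ j, (0 ≤ x j ∧ x j < n) ∧ (T:ℤ) * x j / n = u j := by
  simp [cellB, cellD]

lemma prod_card_le (m k : ℕ) (f g : Fin m → Finset ℤ) (h : ∀ j, (f j).card ≤ k * (g j).card) :
    ((Fintype.piFinset f).card : ℝ) ≤ (k:ℝ) ^ m * ((Fintype.piFinset g).card : ℝ) := by
  rw [Fintype.card_piFinset, Fintype.card_piFinset]
  have : ∏ j, (f j).card ≤ ∏ j : Fin m, (k * (g j).card) :=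
    Finset.prod_le_prod' fun j _ => h j
  rw [Finset.prod_mul_distrib] at this
  simp only [Finset.prod_const, Finset.card_univ, Fintype.card_fin] at this
  exact_mod_cast this

lemma last_level (m k : ℕ) (hm : 1 ≤ m) (hk : 3 ≤ k) (ε : ℝ) (hε : 0 < ε) (t : ℕ)
    (ht : (k : ℝ) * Real.sqrt m / ε ≤ (t : ℝ)) (htk : t < k) (X : Finset (Fin m → ℤ))
    (hX : ¬ FinsetContainsCube ε m k X) (l : Fin m → ℤ) (c : Fin m → ℕ)
    (hc1 : ∀ j, k ≤ c j) (hc2 : ∀ j, c j ≤ 2 * k) (S : Finset (Fin m → ℤ))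
    (hS : S = Fintype.piFinset (fun j => Finset.Ico (l j) (l j + c j))) :
    ((X ∩ S).card : ℝ) ≤ (((k:ℝ) ^ m - 1) / (k:ℝ) ^ m) * S.card := by
  classical
  let W : (Fin m → ℕ) → Finset (Fin m → ℤ) := fun v => Fintype.piFinset (fun j =>
    Finset.Ico (l j + v j) (min (l j + v j + 2) (l j + c j)))
  have key : ∃ v : Fin m → ℕ, (∀ j, v j < k) ∧ X ∩ W v = ∅ := by
    by_contra hcon
    push Not at hcon
    choose! y hy using hcon
    apply hX
    refine cube_of m k hm hk ε hε t ht X y (fun j => l j) 1 one_pos ?_ ?_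
    · intro v hv; exact (Finset.mem_inter.1 (hy v hv)).1
    · intro v hv j
      have h1 := (Finset.mem_inter.1 (hy v hv)).2
      simp only [W, Fintype.mem_piFinset, Finset.mem_Ico] at h1
      obtain ⟨h2, h3⟩ := h1 j
      have h4 : y v j < l j + v j + 2 := lt_of_lt_of_le h3 (min_le_left _ _)
      have h5 : |(y v j : ℝ) - (l j + 1 * (v j : ℝ))| ≤ 1 := by
        have h6 : y v j ≤ l j + v j + 1 := by omega
        have h7 : (l j : ℝ) + v j ≤ y v j := by exact_mod_cast h2
        have h8 : (y v j : ℝ) ≤ l j + v j + 1 := by exact_mod_cast h6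
        rw [abs_le]; constructor <;> linarith
      have h9 : (t:ℝ) < k := by exact_mod_cast htk
      have h10 : (0:ℝ) ≤ t := by positivity
      nlinarith
  obtain ⟨v, hv, hvX⟩ := key
  have hWS : W v ⊆ S := by
    rw [hS]
    apply Fintype.piFinset_subset
    intro j
    apply Finset.Ico_subset_Ico (by omega) (min_le_right _ _)
  have hk0 : (0:ℝ) < (k:ℝ) ^ m := by
    have : 0 < k := by omega
    positivity
  have hcard : (S.card : ℝ) ≤ (k:ℝ) ^ m * ((W v).card : ℝ) := by
    rw [hS]
    apply prod_card_le
    intro j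
    have a1 := hc1 j
    have a2 := hc2 j
    have a3 := hv j
    simp only [Int.card_Ico]
    rcases eq_or_lt_of_le a1 with h | h
    · have : 1 ≤ (min (l j + v j + 2) (l j + c j) - (l j + v j)).toNat := by omega
      have h' : (l j + (c j:ℤ) - l j).toNat = k := by omega
      rw [h']; nlinarith
    · have : 2 ≤ (min (l j + v j + 2) (l j + c j) - (l j + v j)).toNat := by omega
      have h' : (l j + (c j:ℤ) - l j).toNat ≤ 2 * k := by omega
      nlinarith
  have hfil : S.filter (fun x => decide (x ∈ W v) = true) = W v := by
    ext x
    simp only [decide_eq_true_eq, Finset.mem_filter]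
    exact ⟨fun h => h.2, fun h => ⟨hWS h, h⟩⟩
  have := abs_step S X (fun x => decide (x ∈ W v)) Finset.univ (fun _ _ => Finset.mem_univ _) 1
    ((k:ℝ) ^ m) zero_le_one hk0 (by
      intro u _
      rw [one_mul]
      exact_mod_cast Finset.card_le_card (Finset.filter_subset_filter _ Finset.inter_subset_right))
    true (Finset.mem_univ _) (by
      intro x hx _ h
      have : x ∈ X ∩ W v := Finset.mem_inter.2 ⟨hx, of_decide_eq_true h⟩
      rw [hvX] at this
      simp at this) (by rw [hfil]; exact hcard)
  simpa using this

lemma tree_bound (m k : ℕ) (hm : 1 ≤ m) (hk : 3 ≤ k) (ε : ℝ) (hε : 0 < ε) (t : ℕ)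
    (ht : (k : ℝ) * Real.sqrt m / ε ≤ (t : ℝ)) (ht2 : 2 ≤ t) (htk : t < k)
    (X : Finset (Fin m → ℤ))
    (hX : ¬ FinsetContainsCube ε m k X) (n L : ℕ) (hn1 : k * t ^ L ≤ n) (hn2 : n ≤ 2 * k * t ^ L)
    (s : ℕ) : ∀ i, i + s = L → ∀ u : Fin m → ℤ, (∀ j, 0 ≤ u j ∧ u j < (t:ℤ) ^ i) →
    ((X ∩ cellB m n (t ^ i) u).card : ℝ) ≤
      (((k:ℝ) ^ m - 1) / (k:ℝ) ^ m) ^ (s + 1) * (cellB m n (t ^ i) u).card := by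
  classical
  have htp : ∀ i, 0 < t ^ i := fun i => by positivity
  have hn0 : 0 < n := lt_of_lt_of_le (Nat.mul_pos (by omega) (htp L)) hn1
  have hk0 : (0:ℝ) < (k:ℝ) ^ m := by
    have : 0 < k := by omega
    positivity
  have hβ : (0:ℝ) ≤ ((k:ℝ) ^ m - 1) / (k:ℝ) ^ m := by
    apply div_nonneg _ hk0.le
    have : (1:ℝ) ≤ (k:ℝ) ^ m := one_le_pow₀ (by exact_mod_cast (by omega : 1 ≤ k))
    linarith
  induction s with
  | zero =>
    intro i hi u hu
    obtain rfl : i = L := by omega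
    have hc := fun j => cellD_card n (t ^ i) hn0 (htp i) (u j) (hu j).1 (by exact_mod_cast (hu j).2)
    choose l c h1 h2 h3 h4 using hc
    rw [zero_add, pow_one]
    refine last_level m k hm hk ε hε t ht htk X hX l c ?_ ?_ _ ?_
    · intro j
      have : k * t ^ i < (c j + 1) * t ^ i := lt_of_le_of_lt hn1 (h3 j)
      have := Nat.lt_of_mul_lt_mul_right this
      omega
    · intro j
      have : c j * t ^ i < (2 * k + 1) * t ^ i := by
        have := h4 j
        linarith
      have := Nat.lt_of_mul_lt_mul_right this
      omega
    · simp only [cellB]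
      congr 1
      funext j
      exact h1 j
  | succ s ih =>
    intro i hi u hu
    have hti : (0:ℤ) < t := by omega
    have hn' : (0:ℤ) < n := by omega
    -- children
    have child_range : ∀ w : Fin m → ℕ, (∀ j, w j < t) → ∀ j,
        0 ≤ t * u j + w j ∧ t * u j + w j < (t:ℤ) ^ (i + 1) := by
      intro w hw j
      obtain ⟨a1, a2⟩ := hu j
      have a3 := hw j
      constructor
      · positivity
      · have : (t:ℤ) * (u j + 1) ≤ t * (t:ℤ) ^ i := by gcongr; omega
        rw [pow_succ]
        have : (w j : ℤ) < t := by omega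
        linarith
    have key : ∃ w : Fin m → ℕ, (∀ j, w j < t) ∧
        X ∩ cellB m n (t ^ (i+1)) (fun j => t * u j + w j) = ∅ := by
      by_contra hcon
      push Not at hcon
      choose! y hy using hcon
      apply hX
      have hT0 : (0:ℝ) < (t:ℝ) ^ i := by exact_mod_cast htp i
      have hkr : (0:ℝ) < k := by exact_mod_cast (by omega : 0 < k)
      have hwt : ∀ v : Fin m → ℕ, (∀ j, v j < k) → ∀ j, t * v j / k < t := by
        intro v hv j
        rw [Nat.div_lt_iff_lt_mul (by omega)]
        have := hv j
        exact Nat.mul_lt_mul_of_pos_left this (by omega)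
      refine cube_of m k hm hk ε hε t ht X (fun v => y (fun j => t * v j / k))
        (fun j => (n:ℝ) * u j / (t:ℝ) ^ i) ((n:ℝ) / (k * (t:ℝ) ^ i))
        (by have : (0:ℝ) < n := by exact_mod_cast hn0
            positivity) ?_ ?_
      · intro v hv
        exact (Finset.mem_inter.1 (hy _ (hwt v hv))).1
      · intro v hv j
        have h1 := (mem_cellB.1 (Finset.mem_inter.1 (hy _ (hwt v hv))).2 j).2
        set z := y (fun j => t * v j / k) j with hz
        set w := t * v j / k with hw
        have b1 : w * k ≤ t * v j := Nat.div_mul_le_self _ _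
        have b2 : t * v j < k * (w + 1) := by
          have := Nat.lt_mul_div_succ (t * v j) (by omega : 0 < k)
          exact this
        have a1 := Int.mul_ediv_self_le (x := ((t ^ (i+1) : ℕ):ℤ) * z) (k := n) hn'.ne'
        have a2 := Int.lt_mul_ediv_self_add (x := ((t ^ (i+1) : ℕ):ℤ) * z) hn'
        rw [h1] at a1 a2
        have a1' : (n:ℝ) * (t * u j + w) ≤ (t:ℝ) ^ (i+1) * z := by exact_mod_cast a1
        have a2' : (t:ℝ) ^ (i+1) * z < (n:ℝ) * (t * u j + w) + n := by exact_mod_cast a2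
        have b1' : (w:ℝ) * k ≤ t * v j := by exact_mod_cast b1
        have b2' : (t:ℝ) * v j < k * (w + 1) := by exact_mod_cast b2
        have hnr : (0:ℝ) < n := by exact_mod_cast hn0
        have e1 : (k:ℝ) * ((n:ℝ) / (k * (t:ℝ) ^ i)) = n / (t:ℝ) ^ i := by field_simp
        have htr : (0:ℝ) < t := by exact_mod_cast (by omega : 0 < t)
        rw [e1, lt_div_iff₀ hT0]
        have e0 : ∀ q : ℝ, |q| * t * (t:ℝ) ^ i = |q * t * (t:ℝ) ^ i| := by
          intro q
          rw [abs_mul, abs_mul, abs_of_pos htr, abs_of_pos hT0]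
        rw [e0]
        have e2 : ((z:ℝ) - ((n:ℝ) * u j / (t:ℝ) ^ i + (n:ℝ) / (k * (t:ℝ) ^ i) * v j)) * t * (t:ℝ) ^ i
            = (t:ℝ) ^ (i+1) * z - n * (t * u j) - n * (t * v j / k) := by
          rw [pow_succ]; field_simp; ring
        rw [e2]
        have c1 : (w:ℝ) ≤ t * v j / k := by rw [le_div_iff₀ hkr]; exact b1'
        have c2 : (t:ℝ) * v j / k < w + 1 := by rw [div_lt_iff₀ hkr]; linarith
        have d1 := mul_le_mul_of_nonneg_left c1 hnr.le
        have d2 := mul_lt_mul_of_pos_left c2 hnr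
        rw [abs_lt]; constructor <;> nlinarith
    obtain ⟨w0, hw0, hw0X⟩ := key
    let f : (Fin m → ℤ) → (Fin m → ℤ) := fun x j => ((t ^ (i+1) : ℕ):ℤ) * x j / n
    let U : Finset (Fin m → ℤ) := Fintype.piFinset (fun j => Finset.Ico (t * u j) (t * u j + t))
    have hU : ∀ z ∈ U, ∃ w : Fin m → ℕ, (∀ j, w j < t) ∧ z = fun j => t * u j + w j := by
      intro z hz
      simp only [U, Fintype.mem_piFinset, Finset.mem_Ico] at hz
      refine ⟨fun j => (z j - t * u j).toNat, fun j => ?_, ?_⟩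
      · have := hz j
        show (z j - t * u j).toNat < t
        omega
      · funext j
        have := hz j
        show z j = t * u j + ((z j - t * u j).toNat : ℤ)
        omega
    have hU' : ∀ w : Fin m → ℕ, (∀ j, w j < t) → (fun j => t * u j + (w j : ℤ)) ∈ U := by
      intro w hw
      simp only [U, Fintype.mem_piFinset, Finset.mem_Ico]
      intro j
      have := hw j; omega
    have hdiv : ∀ x : ℤ, ((t ^ i : ℕ):ℤ) * x / n = ((t ^ (i+1) : ℕ):ℤ) * x / n / t := by
      intro x
      rw [Int.ediv_ediv_of_nonneg hn'.le, pow_succ]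
      push_cast
      rw [mul_right_comm, Int.mul_ediv_mul_of_pos_left _ _ hti]
    have hfU : ∀ x ∈ cellB m n (t ^ i) u, f x ∈ U := by
      intro x hx
      simp only [U, Fintype.mem_piFinset, Finset.mem_Ico, f]
      intro j
      have h1 := (mem_cellB.1 hx j).2
      rw [hdiv] at h1
      have a1 := Int.mul_ediv_self_le (x := ((t ^ (i+1) : ℕ):ℤ) * x j / n) (k := t) hti.ne'
      have a2 := Int.lt_mul_ediv_self_add (x := ((t ^ (i+1) : ℕ):ℤ) * x j / n) hti
      rw [h1] at a1 a2
      exact ⟨a1, a2⟩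
    have hfil : ∀ z ∈ U, (cellB m n (t ^ i) u).filter (fun x => f x = z)
        = cellB m n (t ^ (i+1)) z := by
      intro z hz
      obtain ⟨w, hw, rfl⟩ := hU z hz
      ext x
      rw [Finset.mem_filter, mem_cellB, mem_cellB]
      constructor
      · rintro ⟨h1, h2⟩ j
        exact ⟨(h1 j).1, congrFun h2 j⟩
      · intro h
        refine ⟨fun j => ⟨(h j).1, ?_⟩, funext fun j => (h j).2⟩
        rw [hdiv, (h j).2]
        have := hw j
        rw [add_comm, Int.add_mul_ediv_left _ _ hti.ne', Int.ediv_eq_zero_of_lt (by omega) (by omega),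
          zero_add]
    have := abs_step (cellB m n (t ^ i) u) X f U hfU
      ((((k:ℝ) ^ m - 1) / (k:ℝ) ^ m) ^ (s + 1)) ((k:ℝ) ^ m) (pow_nonneg hβ _) hk0 (by
        intro z hz
        rw [← Finset.inter_filter, hfil z hz]
        obtain ⟨w, hw, rfl⟩ := hU z hz
        exact ih (i+1) (by omega) _ (child_range w hw))
      (fun j => t * u j + w0 j) (hU' w0 hw0) (by
        intro x hx hxS hfx
        have h1 : x ∈ (cellB m n (t ^ i) u).filter (fun x => f x = fun j => t * u j + w0 j) :=
          Finset.mem_filter.2 ⟨hxS, hfx⟩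
        rw [hfil _ (hU' w0 hw0)] at h1
        have h2 := Finset.mem_inter.2 ⟨hx, h1⟩
        rw [hw0X] at h2
        simp at h2) (by
        rw [hfil _ (hU' w0 hw0)]
        apply prod_card_le
        intro j
        obtain ⟨_, c, _, g2, g3, g4⟩ := cellD_card n (t ^ i) hn0 (htp i) (u j) (hu j).1
          (by exact_mod_cast (hu j).2)
        obtain ⟨_, c', _, g2', g3', g4'⟩ := cellD_card n (t ^ (i+1)) hn0 (htp (i+1))
          (t * u j + w0 j) (child_range w0 hw0 j).1 (by exact_mod_cast (child_range w0 hw0 j).2)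
        rw [g2, g2']
        have p1 : k * t ^ (i+1) ≤ n :=
          le_trans (Nat.mul_le_mul_left _ (Nat.pow_le_pow_right (by omega) (by omega))) hn1
        have p2 : k < c' + 1 := Nat.lt_of_mul_lt_mul_right (lt_of_le_of_lt p1 g3')
        have p3 : c * t ^ i < ((c' + 1) * t + 1) * t ^ i := by
          rw [pow_succ] at g3'
          nlinarith
        have p4 := Nat.lt_of_mul_lt_mul_right p3
        have p5 : c' * (t + 1) ≤ c' * k := Nat.mul_le_mul_left _ (by omega)
        nlinarith)
    rw [pow_succ]
    exact this

theorem iterated_blowup_dense_subsets (m k r : ℕ) (hm : 1 ≤ m) (hk : 3 ≤ k) (hr : 1 ≤ r)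
    (ε : ℝ) (hε : 0 < ε) (t : ℕ) (ht : (k : ℝ) * Real.sqrt m / ε ≤ (t : ℝ))
    (A : Finset (Fin m → ℤ))
    (hA : A = Finset.image
      (fun v : Fin r → Fin m → Fin k => fun j : Fin m => ∑ i : Fin r, (t : ℤ) ^ (i : ℕ) * (v i j : ℤ))
      Finset.univ)
    (α : ℝ) (hα0 : 0 < α) (hα1 : α < 1)
    (hα : (((k : ℝ) ^ m - 1) / (k : ℝ) ^ m) ^ r < α)
    (X : Finset (Fin m → ℤ)) (hX : X ⊆ A)
    (hXcard : α * (A.card : ℝ) ≤ (X.card : ℝ)) :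
    FinsetContainsCube ε m k X := by
  classical
  by_contra hX'
  have hk0 : (0:ℝ) < (k:ℝ) ^ m := by
    have : 0 < k := by omega
    positivity
  have ht0 : (0:ℝ) < t := by
    refine lt_of_lt_of_le ?_ ht
    have : 0 < k := by omega
    have : 0 < m := by omega
    positivity
  have ht1 : 1 ≤ t := by exact_mod_cast ht0
  have hAne : (0:ℝ) < A.card := by
    have : A.Nonempty := by
      rw [hA]
      exact ⟨_, Finset.mem_image_of_mem _ (Finset.mem_univ (fun _ _ => ⟨0, by omega⟩))⟩
    exact_mod_cast this.card_pos
  -- it suffices to bound X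
  suffices hmain : (X.card : ℝ) ≤ (((k : ℝ) ^ m - 1) / (k : ℝ) ^ m) ^ r * A.card by
    have := mul_lt_mul_of_pos_right hα hAne
    linarith
  by_cases htk : k ≤ t
  · have hcard : A.card = (k ^ m) ^ r := by
      rw [hA, Finset.card_image_of_injective]
      · simp
      · intro v w h
        have : ∀ j, (fun i => v i j) = (fun i => w i j) := fun j =>
          digits_inj k t htk r _ _ (congrFun h j)
        funext i j
        exact congrFun (this j) i
    have hsub : X ∩ blkS m k t r 0 = X := by
      apply Finset.inter_eq_left.2
      intro x hx
      have hx := hX hx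
      rw [hA] at hx
      obtain ⟨v, _, rfl⟩ := Finset.mem_image.1 hx
      have := mem_blkS m k t r 0 v
      simpa using this
    have h1 := blkS_card m k hm hk ε hε t ht htk X hX' r 0
    rw [hsub] at h1
    have h2 : (X.card : ℝ) ≤ ((k:ℝ) ^ m - 1) ^ r := by
      have h3 : 1 ≤ k ^ m := Nat.one_le_pow _ _ (by omega)
      have h4 : (X.card : ℝ) ≤ (((k ^ m - 1) ^ r : ℕ) : ℝ) := by exact_mod_cast h1
      rw [Nat.cast_pow, Nat.cast_sub h3] at h4
      simpa using h4
    rw [hcard, div_pow]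
    push_cast
    rw [div_mul_cancel₀ _ (by positivity)]
    exact h2
  · push Not at htk
    by_cases ht2 : 2 ≤ t
    · obtain ⟨L, rfl⟩ : ∃ L, r = L + 1 := ⟨r - 1, by omega⟩
      have hAB : A = cellB m (bN k t (L+1)) (t ^ 0) 0 := by
        have hn := bN_pos k t ht1 (L+1)
        ext x
        rw [mem_cellB, hA]
        simp only [Finset.mem_image, Finset.mem_univ, true_and]
        constructor
        · rintro ⟨v, rfl⟩ j
          have h1 := repr_lt k t ht1 htk (L+1) (fun i => v i j)
          have h0 : 0 ≤ ∑ i : Fin (L+1), (t : ℤ) ^ (i : ℕ) * ((v i j : ℕ) : ℤ) :=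
            Finset.sum_nonneg fun i _ => by positivity
          refine ⟨⟨h0, h1⟩, ?_⟩
          simp only [pow_zero, Nat.cast_one, one_mul, Pi.zero_apply]
          exact Int.ediv_eq_zero_of_lt h0 h1
        · intro h
          have := fun j => repr_exists k t ht1 htk (L+1) (x j) (h j).1.1 (h j).1.2
          choose v hv using this
          exact ⟨fun i j => v j i, funext fun j => hv j⟩
      have h1 := tree_bound m k hm hk ε hε t ht ht2 htk X hX' (bN k t (L+1)) L
        (bN_lower k t htk L) (by have := bN_upper k t ht2 htk L; omega) L 0 (by omega) 0
        (by intro j; simp)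
      rw [← hAB, Finset.inter_eq_left.2 hX] at h1
      exact h1
    · obtain rfl : t = 1 := by omega
      exfalso
      have hXne : X.Nonempty := by
        rw [Finset.nonempty_iff_ne_empty]
        rintro rfl
        simp only [Finset.card_empty, Nat.cast_zero] at hXcard
        have := mul_pos hα0 hAne
        linarith
      obtain ⟨x, hx⟩ := hXne
      apply hX'
      refine cube_of m k hm hk ε hε 1 ht X (fun _ => x) (fun j => x j) 1 one_pos
        (fun _ _ => hx) ?_
      intro v hv j
      have : (v j : ℝ) < k := by exact_mod_cast hv j
      simpa using this
end
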